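/- Let A = 2^{−9/√2} · 3√3/(√2·π²) (so A ≈ 0.00449). Then for all natural numbers m ≥ ℓ ≥ 8 and all k with 2 ≤ k ≤ ℓm/2, one has (as real numbers) p_k(ℓ,m) − p_{k−1}(ℓ,m) > A · 2^{√s} / s^{9/4}, where s = min{2k, ℓ²}. -/

import Mathlib

/-- `rectPartitions k l m` is the number of integer partitions of `k` fitting in an
`l × m` rectangle: at most `l` parts, each part at most `m`. -/
noncomputable def rectPartitions (k l m : ℕ) : ℕ :=
  Nat.card {π : Nat.Partition k // Multiset.card π.parts ≤ l ∧ ∀ i ∈ π.parts, i ≤ m}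

/-!
The `k`-th coefficient of a Gaussian binomial coefficient is the dimension of a weight space of
`Sym^l` of the `(m + 1)`-dimensional irreducible representation of `sl₂`, so below the middle the
difference of consecutive coefficients counts highest weight vectors. As a product of two nonzero
highest weight vectors is again one, multiplicities never decrease when a rectangle with positive
multiplicity is glued on; finitely many base cases then give positivity in all large rectangles and
reduce the lower bound to the middle of a `2q × 2q` square. There the action of `sl₂` on the
exterior power model preserves the functions antisymmetric under conjugation of partitions, and the
growth of their weight spaces bounds the multiplicity below by the central gap of the self-conjugate
partitions. That gap is the Fourier integral of `∏ cos ((2 j + 1) θ / 2) * (1 - cos θ)`, whose mass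
sits near `θ = 0` as soon as `q ≥ 64`; for smaller `q` it is read off from the digits of the
generating function at a power of two.
-/

open Finset

section GaussianBinomial

open Polynomial

/-- The Gaussian binomial coefficient `binom(l + m, m)_q` as a polynomial in `q`, encoded by one
of the two `q`-Pascal rules. -/
noncomputable def gaussBinom : ℕ → ℕ → ℕ[X]
  | 0, _ => 1
  | _ + 1, 0 => 1
  | l + 1, m + 1 => gaussBinom (l + 1) m + X ^ (m + 1) * gaussBinom l (m + 1)

namespace gaussBinom

theorem zero_left (m : ℕ) : gaussBinom 0 m = 1 := by rw [gaussBinom]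

theorem zero_right (l : ℕ) : gaussBinom l 0 = 1 := by cases l <;> rw [gaussBinom]

theorem succ_succ (l m : ℕ) : gaussBinom (l + 1) (m + 1) =
    gaussBinom (l + 1) m + X ^ (m + 1) * gaussBinom l (m + 1) := by rw [gaussBinom]

theorem coeff_zero (l m : ℕ) : (gaussBinom l m).coeff 0 = 1 := by
  induction l, m using gaussBinom.induct with
  | case1 m => rw [zero_left, coeff_one_zero]
  | case2 l => rw [zero_right, coeff_one_zero]
  | case3 l m ih =>
    rw [succ_succ, coeff_add, ih, mul_coeff_zero, coeff_X_pow, if_neg m.succ_ne_zero.symm, zero_mul,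
      add_zero]

end gaussBinom

/-- The multisets of `l` natural numbers at most `m` with sum `k`: partitions of `k` in an `l × m`
rectangle, padded with zeros. -/
def boundedMultisets (l m k : ℕ) : Set (Multiset ℕ) :=
  {s | s.card = l ∧ (∀ i ∈ s, i ≤ m) ∧ s.sum = k}

theorem boundedMultisets_succ_succ (l m k : ℕ) : boundedMultisets (l + 1) (m + 1) k =
    boundedMultisets (l + 1) m k ∪
      (fun s => (m + 1) ::ₘ s) ''
        {s | m + 1 ≤ k ∧ s ∈ boundedMultisets l (m + 1) (k - (m + 1))} := by
  ext s
  constructor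
  · rintro ⟨hcard, hle, hsum⟩
    by_cases hm : m + 1 ∈ s
    · obtain ⟨t, rfl⟩ := Multiset.exists_cons_of_mem hm
      rw [Multiset.sum_cons] at hsum
      refine Or.inr ⟨t, ⟨by omega, ?_, fun i hi => ?_, by omega⟩, rfl⟩
      · simpa using hcard
      · exact hle i (Multiset.mem_cons_of_mem hi)
    · refine Or.inl ⟨hcard, fun i hi => ?_, hsum⟩
      exact Nat.lt_succ_iff.1 ((hle i hi).lt_of_ne fun h => hm (h ▸ hi))
  · rintro (⟨hcard, hle, hsum⟩ | ⟨t, ⟨hk, hcard, hle, hsum⟩, rfl⟩)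
    · exact ⟨hcard, fun i hi => (hle i hi).trans m.le_succ, hsum⟩
    · exact ⟨by simp [hcard], by simpa using hle, by rw [Multiset.sum_cons]; omega⟩

theorem disjoint_boundedMultisets_image_cons (l m k : ℕ) (t : Set (Multiset ℕ)) :
    Disjoint (boundedMultisets l m k) ((fun s => (m + 1) ::ₘ s) '' t) := by
  rw [Set.disjoint_left]
  rintro _ ⟨-, hle, -⟩ ⟨s, -, rfl⟩
  exact m.lt_irrefl (hle (m + 1) (Multiset.mem_cons_self _ _))

theorem encard_boundedMultisets (l m k : ℕ) :
    (boundedMultisets l m k).encard = (gaussBinom l m).coeff k := by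
  have encard_of_forced {l m k : ℕ} {s : Multiset ℕ} (hs : s.sum = 0)
      (h : ∀ t : Multiset ℕ, (t.card = l ∧ ∀ i ∈ t, i ≤ m) ↔ t = s) :
      (boundedMultisets l m k).encard = (1 : ℕ[X]).coeff k := by
    simp only [boundedMultisets, ← and_assoc, h, coeff_one]
    split_ifs with hk
    · rw [Set.encard_eq_one.2 ⟨s, by ext t; simp +contextual [hs, hk]⟩, Nat.cast_one]
    · rw [Set.encard_eq_zero.2 (by ext t; simp +contextual [hs, Ne.symm hk]), Nat.cast_zero]
  induction l, m using gaussBinom.induct generalizing k with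
  | case1 m =>
    rw [gaussBinom.zero_left]
    exact encard_of_forced Multiset.sum_zero fun t => by simp +contextual [Multiset.card_eq_zero]
  | case2 l =>
    rw [gaussBinom.zero_right]
    refine encard_of_forced (s := Multiset.replicate (l + 1) 0) (by simp) fun t => ?_
    rw [Multiset.eq_replicate]
    simp only [Nat.le_zero]
  | case3 l m ih₁ ih₂ =>
    have cons_injective : Function.Injective fun s : Multiset ℕ => (m + 1) ::ₘ s :=
      fun _ _ => (Multiset.cons_inj_right _).1
    rw [boundedMultisets_succ_succ,
      Set.encard_union_eq (disjoint_boundedMultisets_image_cons _ _ _ _), ih₁,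
      cons_injective.encard_image, gaussBinom.succ_succ, coeff_add, coeff_X_pow_mul', Nat.cast_add]
    split_ifs with hk
    · simp only [hk, true_and, Set.ofPred_mem_eq, ih₂]
    · simp [hk]

theorem multiset_filter_ne_zero_add_replicate (s : Multiset ℕ) :
    s.filter (· ≠ 0) + Multiset.replicate (s.card - (s.filter (· ≠ 0)).card) 0 = s := by
  have hcard := congrArg Multiset.card (Multiset.filter_add_not (· ≠ 0) s)
  have hzero : s.filter (¬ · ≠ 0) = Multiset.replicate (s.filter (¬ · ≠ 0)).card 0 :=
    Multiset.eq_replicate_card.2 fun i hi => not_not.1 (Multiset.mem_filter.1 hi).2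
  rw [Multiset.card_add] at hcard
  rw [← hcard, Nat.add_sub_cancel_left, ← hzero, Multiset.filter_add_not]

theorem rectPartitions_eq_coeff_gaussBinom (k l m : ℕ) :
    rectPartitions k l m = (gaussBinom l m).coeff k := by
  have filter_pad (s : Multiset ℕ) (hs : ∀ i ∈ s, 0 < i) (n : ℕ) :
      (s + Multiset.replicate n 0).filter (· ≠ 0) = s := by
    rw [Multiset.filter_add, Multiset.filter_eq_self.2 fun i hi => (hs i hi).ne',
      Multiset.filter_eq_nil.2 fun i hi => by simp [Multiset.eq_of_mem_replicate hi], add_zero]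
  let pad : {π : Nat.Partition k // π.parts.card ≤ l ∧ ∀ i ∈ π.parts, i ≤ m} ≃
      boundedMultisets l m k :=
    { toFun π := ⟨π.1.parts + Multiset.replicate (l - π.1.parts.card) 0, by
        refine ⟨?_, fun i hi => ?_, by simp [π.1.parts_sum]⟩
        · rw [Multiset.card_add, Multiset.card_replicate, Nat.add_sub_cancel' π.2.1]
        · rcases Multiset.mem_add.1 hi with hi | hi
          · exact π.2.2 i hi
          · exact (Multiset.eq_of_mem_replicate hi).trans_le m.zero_le⟩
      invFun s := ⟨Nat.Partition.ofSums k s s.2.2.2,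
        (Multiset.card_le_card (Multiset.filter_le _ _)).trans s.2.1.le,
        fun i hi => s.2.2.1 i (Multiset.mem_of_mem_filter hi)⟩
      left_inv π := Subtype.ext <| Nat.Partition.ext <|
        filter_pad _ (fun _ => π.1.parts_pos) _
      right_inv s := Subtype.ext <| by
        conv_rhs => rw [← multiset_filter_ne_zero_add_replicate s.1, s.2.1]
        rfl }
  rw [rectPartitions, Nat.card_congr pad, Nat.card_coe_set_eq, Set.ncard_def,
    encard_boundedMultisets, ENat.toNat_natCast]

theorem sum_powersetCard_range_X_pow (l m : ℕ) :
    ∑ S ∈ powersetCard l (range (l + m)), (X : ℕ[X]) ^ (∑ i ∈ S, i) =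
      X ^ (∑ i ∈ range l, i) * gaussBinom l m := by
  induction l, m using gaussBinom.induct with
  | case1 m => simp [gaussBinom.zero_left]
  | case2 l =>
    simpa [gaussBinom.zero_right] using congrArg (∑ S ∈ ·, (X : ℕ[X]) ^ (∑ i ∈ S, i))
      (powersetCard_self (range (l + 1)))
  | case3 l m ih₁ ih₂ =>
    have notMem {S : Finset ℕ} (hS : S ∈ powersetCard l (range (l + 1 + m))) : l + 1 + m ∉ S :=
      fun h => notMem_range_self ((mem_powersetCard.1 hS).1 h)
    have sum_insert_top : ∀ S ∈ powersetCard l (range (l + 1 + m)),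
        (X : ℕ[X]) ^ (∑ i ∈ insert (l + 1 + m) S, i) = X ^ (l + 1 + m) * X ^ (∑ i ∈ S, i) :=
      fun S hS => by rw [sum_insert (notMem hS), pow_add]
    have hdisj : Disjoint (powersetCard (l + 1) (range (l + 1 + m)))
        ((powersetCard l (range (l + 1 + m))).image (insert (l + 1 + m))) := by
      rw [Finset.disjoint_left]
      rintro _ hS hS'
      obtain ⟨T, -, rfl⟩ := mem_image.1 hS'
      exact notMem_range_self ((mem_powersetCard.1 hS).1 (mem_insert_self _ _))
    rw [show l + 1 + (m + 1) = (l + 1 + m) + 1 by ring, range_add_one,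
      powersetCard_succ_insert notMem_range_self, sum_union hdisj, ih₁, sum_image,
      sum_congr rfl sum_insert_top, ← mul_sum, show l + 1 + m = l + (m + 1) by ring, ih₂,
      sum_range_succ _ l, gaussBinom.succ_succ]
    · ring
    · intro S hS T hT hST
      rw [← erase_insert (notMem hS), hST, erase_insert (notMem hT)]

/-- The `l`-element subsets of `{0, …, n - 1}` whose sum exceeds the least possible one by `k`:
the subset model of the partitions of `k` in an `l × (n - l)` rectangle. -/
def subsetsOfExcess (n l k : ℕ) : Finset (Finset (Fin n)) :=
  {S ∈ powersetCard l univ | ∑ i ∈ S, (i : ℕ) = k + ∑ i ∈ range l, i}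

theorem mem_subsetsOfExcess {n l k : ℕ} {S : Finset (Fin n)} :
    S ∈ subsetsOfExcess n l k ↔ #S = l ∧ ∑ i ∈ S, (i : ℕ) = k + ∑ i ∈ range l, i := by
  simp [subsetsOfExcess]

theorem card_subsetsOfExcess {n l m : ℕ} (hn : n = l + m) (k : ℕ) :
    #(subsetsOfExcess n l k) = (gaussBinom l m).coeff k := by
  have hgen : ∑ S ∈ powersetCard l (univ : Finset (Fin n)), (X : ℕ[X]) ^ (∑ i ∈ S, (i : ℕ)) =
      X ^ (∑ i ∈ range l, i) * gaussBinom l m := by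
    rw [← sum_powersetCard_range_X_pow, ← hn, ← Nat.Iio_eq_range, ← Fin.map_valEmbedding_univ,
      powersetCard_map, sum_map]
    simp [mapEmbedding_apply]
  have hcoeff := congrArg (coeff · (k + ∑ i ∈ range l, i)) hgen
  simp only [coeff_X_pow_mul, finsetSum_coeff, coeff_X_pow] at hcoeff
  rw [subsetsOfExcess, card_filter, ← hcoeff]
  simp only [eq_comm]

/-- The complement of the mirror image: the subset model of the conjugation of partitions. -/
def reflCompl {n : ℕ} (S : Finset (Fin n)) : Finset (Fin n) := (S.map Fin.revPerm.toEmbedding)ᶜ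

theorem mem_reflCompl {n : ℕ} {S : Finset (Fin n)} {i : Fin n} : i ∈ reflCompl S ↔ i.rev ∉ S := by
  simp [reflCompl]

theorem reflCompl_involutive (n : ℕ) : Function.Involutive (reflCompl (n := n)) := fun S => by
  ext i
  simp [mem_reflCompl]

theorem sum_range_cast_mul_two (R : Type*) [CommRing R] (n : ℕ) :
    (∑ i ∈ range n, (i : R)) * 2 = n * (n - 1) := by
  induction n with
  | zero => simp
  | succ n ih => rw [sum_range_succ, add_mul, ih]; push_cast; ring

theorem reflCompl_mem_subsetsOfExcess {n l m k : ℕ} (hn : n = l + m) {S : Finset (Fin n)}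
    (hS : S ∈ subsetsOfExcess n l k) : reflCompl S ∈ subsetsOfExcess n m k := by
  obtain ⟨hcard, hsum⟩ := mem_subsetsOfExcess.1 hS
  refine mem_subsetsOfExcess.2 ⟨by simp [reflCompl, card_compl, hcard, hn], ?_⟩
  have hrev : ∑ i ∈ S, ((i.rev : ℕ) : ℤ) + ∑ i ∈ S, ((i : ℕ) : ℤ) = l * (n - 1) := by
    have rev_add (i : Fin n) : ((i.rev : ℕ) : ℤ) + ((i : ℕ) : ℤ) = n - 1 := by
      rw [Fin.val_rev]
      omega
    rw [← sum_add_distrib, sum_congr rfl fun i _ => rev_add i, sum_const, hcard, nsmul_eq_mul]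
  have hcompl : ∑ i ∈ reflCompl S, ((i : ℕ) : ℤ) + ∑ i ∈ S, ((i.rev : ℕ) : ℤ) =
      ∑ i ∈ range n, (i : ℤ) := by
    rw [← Fin.sum_univ_eq_sum_range (fun i => (i : ℤ)),
      ← sum_compl_add_sum (S.map Fin.revPerm.toEmbedding), sum_map]
    rfl
  have hl := sum_range_cast_mul_two ℤ l
  have hm := sum_range_cast_mul_two ℤ m
  have hlm := sum_range_cast_mul_two ℤ n
  zify at hsum hn ⊢
  rw [hn] at hrev hlm
  linarith

namespace gaussBinom

theorem comm (l m : ℕ) : gaussBinom l m = gaussBinom m l := by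
  have coeff_le (l m k : ℕ) : (gaussBinom l m).coeff k ≤ (gaussBinom m l).coeff k := by
    rw [← card_subsetsOfExcess rfl, ← card_subsetsOfExcess (add_comm l m)]
    exact card_le_card_of_injOn reflCompl (fun S hS => reflCompl_mem_subsetsOfExcess rfl hS)
      (reflCompl_involutive _).injective.injOn
  ext k
  exact (coeff_le l m k).antisymm (coeff_le m l k)

end gaussBinom

/-- The product `∏ (x ^ i - 1)` over `1 ≤ i ≤ n`, which is the `q`-factorial of `n` at `q = x` up
to the factor `(x - 1) ^ n`; the truncated subtraction is harmless for `1 ≤ x`. -/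
def qFactorial (x n : ℕ) : ℕ := ∏ i ∈ range n, (x ^ (i + 1) - 1)

theorem eval_gaussBinom_mul_qFactorial {x : ℕ} (hx : 1 ≤ x) (l m : ℕ) :
    (gaussBinom l m).eval x * (qFactorial x l * qFactorial x m) = qFactorial x (l + m) := by
  induction l, m using gaussBinom.induct with
  | case1 m => simp [gaussBinom.zero_left, qFactorial]
  | case2 l => simp [gaussBinom.zero_right, qFactorial]
  | case3 l m ih₁ ih₂ =>
    have qFactorial_succ (n : ℕ) : qFactorial x (n + 1) = qFactorial x n * (x ^ (n + 1) - 1) :=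
      prod_range_succ _ _
    obtain ⟨a, ha⟩ := Nat.exists_eq_add_of_le (Nat.one_le_pow (l + 1) x hx)
    obtain ⟨b, hb⟩ := Nat.exists_eq_add_of_le (Nat.one_le_pow (m + 1) x hx)
    have hab : x ^ (l + 1 + (m + 1)) - 1 = b + (1 + b) * a := by
      rw [pow_add, ha, hb]
      ring_nf
      omega
    have ha' : x ^ (l + 1) - 1 = a := by omega
    have hb' : x ^ (m + 1) - 1 = b := by omega
    rw [← add_assoc (l + 1) m 1] at *
    rw [qFactorial_succ (l + 1 + m), hab, gaussBinom.succ_succ, eval_add, eval_mul, eval_pow,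
      eval_X, hb, add_mul, mul_add (qFactorial x (l + 1 + m))]
    congr 1
    · rw [← ih₁, qFactorial_succ m, hb']
      ring
    · rw [show l + 1 + m = l + (m + 1) by ring, ← ih₂, qFactorial_succ l, ha']
      ring

end GaussianBinomial

section LoweringRaising

variable {K V : Type*} [Field K] [AddCommGroup V] [Module K V]

/-- The operators `E` and `F` satisfy the `sl₂` relation on a grading `P 0, P 1, …` in which
`P j` has weight `N - 2 j`; `E` lowers the index `j` and `F` raises it. -/
structure LoweringRaising (E F : V →ₗ[K] V) (P : ℕ → Submodule K V) (N : ℕ) : Prop where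
  lower_zero : ∀ v ∈ P 0, E v = 0
  lower_mem : ∀ j, ∀ v ∈ P (j + 1), E v ∈ P j
  raise_mem : ∀ j, ∀ v ∈ P j, F v ∈ P (j + 1)
  commutator : ∀ j, ∀ v ∈ P j, E (F v) = F (E v) + ((N : K) - 2 * j) • v

namespace LoweringRaising

variable {E F : V →ₗ[K] V} {P : ℕ → Submodule K V} {N : ℕ}

theorem raise_pow_mem (h : LoweringRaising E F P N) {j : ℕ} {v : V} (hv : v ∈ P j) (i : ℕ) :
    (F ^ i) v ∈ P (j + i) := by
  induction i with
  | zero => exact hv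
  | succ i ih =>
    rw [pow_succ', Module.End.mul_apply]
    exact h.raise_mem _ _ ih

theorem lower_pow_mem (h : LoweringRaising E F P N) {i j : ℕ} {v : V} (hv : v ∈ P (j + i)) :
    (E ^ i) v ∈ P j := by
  induction i generalizing j with
  | zero => exact hv
  | succ i ih =>
    rw [pow_succ', Module.End.mul_apply]
    exact h.lower_mem _ _ (ih (by rwa [add_right_comm]))

theorem lower_raise_pow_succ (h : LoweringRaising E F P N) {j : ℕ} {v : V} (hv : v ∈ P j)
    (i : ℕ) :
    E ((F ^ (i + 1)) v) = (F ^ (i + 1)) (E v) + ((i + 1) * (N - 2 * j - i) : K) • (F ^ i) v := by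
  induction i with
  | zero => simp [h.commutator j v hv]
  | succ i ih =>
    rw [pow_succ' F (i + 1), Module.End.mul_apply, h.commutator _ _ (h.raise_pow_mem hv (i + 1)),
      ih, map_add, map_smul, ← Module.End.mul_apply F, ← Module.End.mul_apply F, ← pow_succ',
      ← pow_succ', add_assoc, ← add_smul]
    congr 2
    push_cast
    ring

variable [CharZero K]

/-- Below the middle weight `E` is onto: `F ^ i (E ^ i v)` is in the range for `i = j + 1`, where
it vanishes, and the commutation relation descends from `i + 1` to `i`. -/
theorem exists_lower_eq (h : LoweringRaising E F P N) {j : ℕ} (hj : 2 * j < N) {v : V}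
    (hv : v ∈ P j) : ∃ u ∈ P (j + 1), E u = v := by
  suffices descend : ∀ d i, i + d = j + 1 → (F ^ i) ((E ^ i) v) ∈ (P (j + 1)).map E from
    descend (j + 1) 0 (Nat.zero_add _)
  intro d
  induction d with
  | zero =>
    rintro i rfl
    rw [pow_succ' E, Module.End.mul_apply,
      h.lower_zero _ (h.lower_pow_mem (by rwa [Nat.zero_add])), map_zero]
    exact zero_mem _
  | succ d ih =>
    intro i hi
    obtain ⟨c, rfl⟩ : ∃ c, j = c + i := ⟨d, by omega⟩
    have hEv : (E ^ i) v ∈ P c := h.lower_pow_mem hv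
    have hcomm := h.lower_raise_pow_succ hEv i
    rw [← Module.End.mul_apply E (E ^ i), ← pow_succ' E] at hcomm
    have hne : ((i + 1) * (N - 2 * c - i) : K) ≠ 0 := by
      obtain ⟨e, rfl⟩ := Nat.exists_eq_add_of_lt hj
      convert Nat.cast_ne_zero (R := K).2 (show (i + 1) * (i + e + 1) ≠ 0 by positivity) using 1
      push_cast
      ring
    rw [← Submodule.smul_mem_iff _ hne, ← sub_eq_iff_eq_add'.2 hcomm]
    refine sub_mem (Submodule.mem_map_of_mem ?_) (ih (i + 1) (by omega))
    exact h.raise_pow_mem hEv (i + 1)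

theorem finrank_inf_ker_add_finrank (h : LoweringRaising E F P N) {j : ℕ} (hj : 2 * j < N)
    [FiniteDimensional K (P (j + 1))] :
    Module.finrank K ↥(P (j + 1) ⊓ LinearMap.ker E) + Module.finrank K (P j) =
      Module.finrank K (P (j + 1)) := by
  let lower : P (j + 1) →ₗ[K] P j := E.restrict (h.lower_mem j)
  have hsurj : LinearMap.range lower = ⊤ := LinearMap.range_eq_top.2 fun v => by
    obtain ⟨u, hu, huv⟩ := h.exists_lower_eq hj v.2
    exact ⟨⟨u, hu⟩, Subtype.ext huv⟩
  have hker : LinearMap.ker lower = (P (j + 1) ⊓ LinearMap.ker E).comap (P (j + 1)).subtype := by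
    ext v
    simp [lower, Subtype.ext_iff]
  rw [← LinearMap.finrank_range_add_finrank_ker lower, hsurj, finrank_top, hker, add_comm,
    (Submodule.comapSubtypeEquivOfLe inf_le_left).finrank_eq]

end LoweringRaising

end LoweringRaising

section SymmetricPower

open MvPolynomial

theorem derivation_monomial {R σ : Type*} [CommSemiring R]
    (δ : Derivation R (MvPolynomial σ R) (MvPolynomial σ R)) (d : σ →₀ ℕ) (r : R) :
    δ (monomial d r) =
      r • ∑ i ∈ d.support, monomial (d - Finsupp.single i 1) (d i : R) * δ (X i) := by
  have hδ : δ = mkDerivation R fun i => δ (X i) :=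
    derivation_ext fun i => (mkDerivation_X R (fun i => δ (X i)) i).symm
  conv_lhs => rw [hδ, mkDerivation_monomial]
  rfl

theorem derivation_mem_of_isWeightedHomogeneous {R σ M : Type*} [CommSemiring R] [AddCommMonoid M]
    {w : σ → M} {n : M} {φ : MvPolynomial σ R} (hφ : φ.IsWeightedHomogeneous w n)
    (δ : Derivation R (MvPolynomial σ R) (MvPolynomial σ R)) (Q : Submodule R (MvPolynomial σ R))
    (hδ : ∀ d i, Finsupp.weight w d + w i = n → monomial d 1 * δ (X i) ∈ Q) : δ φ ∈ Q := by
  classical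
  induction hφ using IsWeightedHomogeneous.induction_on with
  | zero => simp
  | add p q _ _ hp hq => rw [map_add]; exact add_mem hp hq
  | monomial d r hd =>
    rw [derivation_monomial]
    refine Q.smul_mem r (sum_mem fun i hi => ?_)
    have hweight := hδ (d - Finsupp.single i 1) i
      (by rw [Finsupp.weight_sub_single_add (Finsupp.mem_support_iff.1 hi), hd])
    rw [← mul_one (d i : R), ← smul_eq_mul (d i : R), ← smul_monomial, smul_mul_assoc]
    exact Q.smul_mem _ hweight

/-- Euler's identity for a derivation acting diagonally on the variables. -/
theorem derivation_eq_smul_of_isWeightedHomogeneous {R σ : Type*} [CommSemiring R]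
    {c : σ → R} {r : R} {φ : MvPolynomial σ R} (hφ : φ.IsWeightedHomogeneous c r)
    {δ : Derivation R (MvPolynomial σ R) (MvPolynomial σ R)} (hδ : ∀ i, δ (X i) = c i • X i) :
    δ φ = r • φ := by
  classical
  induction hφ using IsWeightedHomogeneous.induction_on with
  | zero => simp
  | add p q _ _ hp hq => rw [map_add, hp, hq, smul_add]
  | monomial d a hd =>
    have hterm : ∀ i ∈ d.support, monomial (d - Finsupp.single i 1) (d i : R) * δ (X i) =
        monomial d (d i • c i) := fun i hi => by
      rw [hδ, X, smul_monomial, monomial_mul, tsub_add_cancel_of_le]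
      · simp
      · exact Finsupp.single_le_iff.2 (Nat.one_le_iff_ne_zero.2 (Finsupp.mem_support_iff.1 hi))
    rw [derivation_monomial, sum_congr rfl hterm, ← map_sum, ← hd,
      Finsupp.weight_apply, Finsupp.sum, smul_monomial, smul_monomial, smul_eq_mul, smul_eq_mul,
      mul_comm]

/-- The bidegree (degree, index) of the variables `x₀, …, x_m`. -/
def bidegree (m : ℕ) (i : Fin (m + 1)) : ℕ × ℕ := (1, i)

theorem weight_bidegree (m : ℕ) (d : Fin (m + 1) →₀ ℕ) :
    Finsupp.weight (bidegree m) d =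
      ((Finsupp.toMultiset d).card, ((Finsupp.toMultiset d).map Fin.val).sum) := by
  induction d using Finsupp.induction_linear with
  | zero => simp; rfl
  | add d e hd he => simp [hd, he]
  | single i n => simp [Finsupp.weight_single, bidegree, Multiset.map_nsmul, Multiset.sum_nsmul]

theorem bijOn_boundedMultisets (l m k : ℕ) :
    Set.BijOn (fun d : Fin (m + 1) →₀ ℕ => (Finsupp.toMultiset d).map Fin.val)
      {d | Finsupp.weight (bidegree m) d = (l, k)} (boundedMultisets l m k) := by
  refine ⟨fun d hd => ?_, ?_, fun s hs => ?_⟩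
  · rw [Set.mem_ofPred, weight_bidegree, Prod.mk.injEq] at hd
    refine ⟨by rw [Multiset.card_map, hd.1], fun i hi => ?_, hd.2⟩
    obtain ⟨j, -, rfl⟩ := Multiset.mem_map.1 hi
    exact j.is_le
  · exact ((Multiset.map_injective Fin.val_injective).comp
      Multiset.toFinsupp.symm.injective).injOn
  · obtain ⟨hcard, hle, hsum⟩ := hs
    lift s to Multiset (Fin (m + 1)) using fun i hi => Nat.lt_succ_of_le (hle i hi)
    refine ⟨Multiset.toFinsupp s, ?_, by simp⟩
    rw [Set.mem_ofPred, weight_bidegree]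
    simp_all

/-- The weight space of index `k` in the `l`-th symmetric power of the `(m + 1)`-dimensional
irreducible representation of `sl₂`, realised by polynomials in `x₀, …, x_m`. -/
noncomputable def symWeightSpace (l m k : ℕ) : Submodule ℚ (MvPolynomial (Fin (m + 1)) ℚ) :=
  weightedHomogeneousSubmodule ℚ (bidegree m) (l, k)

theorem monomial_mul_X_mem_symWeightSpace {l m k : ℕ} {d : Fin (m + 1) →₀ ℕ} {i : Fin (m + 1)}
    (h : Finsupp.weight (bidegree m) d + bidegree m i = (l, k)) :
    monomial d 1 * X i ∈ symWeightSpace l m k := by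
  rw [symWeightSpace, ← h]
  exact (isWeightedHomogeneous_monomial _ d 1 rfl).mul (isWeightedHomogeneous_X ℚ _ i)

theorem encard_weight_bidegree (l m k : ℕ) :
    {d : Fin (m + 1) →₀ ℕ | Finsupp.weight (bidegree m) d = (l, k)}.encard =
      (gaussBinom l m).coeff k := by
  rw [← encard_boundedMultisets, ← (bijOn_boundedMultisets l m k).image_eq,
    (bijOn_boundedMultisets l m k).injOn.encard_image]

instance (l m k : ℕ) : FiniteDimensional ℚ (symWeightSpace l m k) := by
  have : Finite {d : Fin (m + 1) →₀ ℕ | Finsupp.weight (bidegree m) d = (l, k)} :=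
    Set.finite_of_encard_eq_coe (encard_weight_bidegree l m k)
  rw [symWeightSpace, weightedHomogeneousSubmodule_eq_finsupp_supported]
  exact Module.Finite.of_basis
    (basisRestrictSupport ℚ {d : Fin (m + 1) →₀ ℕ | Finsupp.weight (bidegree m) d = (l, k)})

theorem finrank_symWeightSpace (l m k : ℕ) :
    Module.finrank ℚ (symWeightSpace l m k) = (gaussBinom l m).coeff k := by
  rw [symWeightSpace, weightedHomogeneousSubmodule_eq_finsupp_supported]
  refine (Module.finrank_eq_nat_card_basis (basisRestrictSupport ℚ
    {d : Fin (m + 1) →₀ ℕ | Finsupp.weight (bidegree m) d = (l, k)})).trans ?_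
  rw [Nat.card_coe_set_eq, Set.ncard_def, encard_weight_bidegree, ENat.toNat_natCast]

/-- The lowering operator `x_{j+1} ↦ x_j`, `x₀ ↦ 0`, on symmetric powers. -/
noncomputable def symLower (m : ℕ) :
    Derivation ℚ (MvPolynomial (Fin (m + 1)) ℚ) (MvPolynomial (Fin (m + 1)) ℚ) :=
  mkDerivation ℚ (Fin.cases 0 fun j => X j.castSucc)

/-- The raising operator `x_j ↦ (j + 1) (m - j) x_{j+1}` on symmetric powers. -/
noncomputable def symRaise (m : ℕ) :
    Derivation ℚ (MvPolynomial (Fin (m + 1)) ℚ) (MvPolynomial (Fin (m + 1)) ℚ) :=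
  mkDerivation ℚ (Fin.lastCases 0 fun j => ((j + 1) * (m - j) : ℚ) • X j.succ)

theorem symLower_X_zero (m : ℕ) : symLower m (X 0) = 0 := mkDerivation_X ..

theorem symLower_X_succ {m : ℕ} (j : Fin m) : symLower m (X j.succ) = X j.castSucc :=
  mkDerivation_X ..

theorem symRaise_X_last (m : ℕ) : symRaise m (X (Fin.last m)) = 0 := by
  rw [symRaise, mkDerivation_X, Fin.lastCases_last]

theorem symRaise_X_castSucc {m : ℕ} (j : Fin m) :
    symRaise m (X j.castSucc) = ((j + 1) * (m - j) : ℚ) • X j.succ := by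
  rw [symRaise, mkDerivation_X, Fin.lastCases_castSucc]

theorem symLower_symRaise_X {m : ℕ} (i : Fin (m + 1)) :
    symLower m (symRaise m (X i)) = ((i + 1) * (m - i) : ℚ) • X i := by
  cases i using Fin.lastCases with
  | last => simp [symRaise_X_last]
  | cast j => rw [symRaise_X_castSucc, Derivation.map_smul, symLower_X_succ, Fin.val_castSucc]

theorem symRaise_symLower_X {m : ℕ} (i : Fin (m + 1)) :
    symRaise m (symLower m (X i)) = (i * (m - i + 1) : ℚ) • X i := by
  cases i using Fin.cases with
  | zero => simp [symLower_X_zero]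
  | succ j =>
    rw [symLower_X_succ, symRaise_X_castSucc, Fin.val_succ]
    push_cast
    ring_nf

theorem commutator_symLower_symRaise {l m k : ℕ} {φ : MvPolynomial (Fin (m + 1)) ℚ}
    (hφ : φ ∈ symWeightSpace l m k) :
    symLower m (symRaise m φ) =
      symRaise m (symLower m φ) + (((l * m : ℕ) : ℚ) - 2 * k) • φ := by
  let diagonal : ℕ × ℕ →+ ℚ :=
    { toFun a := a.1 * m - 2 * a.2
      map_zero' := by simp
      map_add' a b := by simp; ring }
  have hdiag : φ.IsWeightedHomogeneous (diagonal ∘ bidegree m) (((l * m : ℕ) : ℚ) - 2 * k) := by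
    intro d hd
    have := congrArg diagonal (hφ hd)
    simp only [Finsupp.weight_apply, map_finsuppSum, map_nsmul] at this
    rw [Finsupp.weight_apply]
    exact this.trans (by simp [diagonal])
  rw [← derivation_eq_smul_of_isWeightedHomogeneous hdiag (δ := ⁅symLower m, symRaise m⁆),
    Derivation.commutator_apply, add_sub_cancel]
  intro i
  rw [Derivation.commutator_apply, symLower_symRaise_X, symRaise_symLower_X, ← sub_smul]
  congr 1
  simp [diagonal, bidegree]
  ring

theorem loweringRaising_sym (l m : ℕ) :
    LoweringRaising (symLower m).toLinearMap (symRaise m).toLinearMap (symWeightSpace l m)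
      (l * m) where
  lower_zero φ hφ := by
    refine (Submodule.mem_bot ℚ).1 (derivation_mem_of_isWeightedHomogeneous hφ _ _ fun d i hd => ?_)
    cases i using Fin.cases with
    | zero => simp [symLower_X_zero]
    | succ j => simp [Prod.ext_iff, bidegree] at hd
  lower_mem k φ hφ := by
    refine derivation_mem_of_isWeightedHomogeneous hφ _ _ fun d i hd => ?_
    cases i using Fin.cases with
    | zero => simp [symLower_X_zero]
    | succ j =>
      rw [symLower_X_succ]
      refine monomial_mul_X_mem_symWeightSpace ?_
      generalize Finsupp.weight (bidegree m) d = a at hd ⊢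
      simp only [Prod.ext_iff, bidegree, Prod.fst_add, Prod.snd_add, Fin.val_succ,
        Fin.val_castSucc] at hd ⊢
      omega
  raise_mem k φ hφ := by
    refine derivation_mem_of_isWeightedHomogeneous hφ _ _ fun d i hd => ?_
    cases i using Fin.lastCases with
    | last => simp [symRaise_X_last]
    | cast j =>
      rw [symRaise_X_castSucc, mul_smul_comm]
      refine Submodule.smul_mem _ _ (monomial_mul_X_mem_symWeightSpace ?_)
      generalize Finsupp.weight (bidegree m) d = a at hd ⊢
      simp only [Prod.ext_iff, bidegree, Prod.fst_add, Prod.snd_add, Fin.val_succ,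
        Fin.val_castSucc] at hd ⊢
      omega
  commutator _ _ := commutator_symLower_symRaise

/-- The number of irreducible summands with highest weight `l m - 2 k` in the `l`-th symmetric
power of the `(m + 1)`-dimensional irreducible representation of `sl₂`. -/
noncomputable def highestWeightMult (l m k : ℕ) : ℕ :=
  Module.finrank ℚ ↥(symWeightSpace l m k ⊓ LinearMap.ker (symLower m).toLinearMap)

namespace highestWeightMult

theorem zero (l m : ℕ) : highestWeightMult l m 0 = 1 := by
  rw [highestWeightMult, inf_eq_left.2 fun φ hφ => (loweringRaising_sym l m).lower_zero φ hφ,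
    finrank_symWeightSpace, gaussBinom.coeff_zero]

theorem succ_add_coeff {l m k : ℕ} (h : 2 * (k + 1) ≤ l * m) :
    highestWeightMult l m (k + 1) + (gaussBinom l m).coeff k = (gaussBinom l m).coeff (k + 1) := by
  rw [← finrank_symWeightSpace, ← finrank_symWeightSpace]
  exact (loweringRaising_sym l m).finrank_inf_ker_add_finrank (by omega)

theorem comm {l m k : ℕ} (h : 2 * k ≤ l * m) :
    highestWeightMult l m k = highestWeightMult m l k := by
  cases k with
  | zero => rw [zero, zero]
  | succ k =>
    have hlm := succ_add_coeff h
    have hml := succ_add_coeff (mul_comm l m ▸ h)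
    rw [gaussBinom.comm m l] at hml
    exact add_right_cancel (hlm.trans hml.symm)

/-- Multiplication by a nonzero highest weight vector preserves highest weight vectors. -/
theorem le_add {l₁ l₂ m k₁ k₂ : ℕ} (h : 1 ≤ highestWeightMult l₂ m k₂) :
    highestWeightMult l₁ m k₁ ≤ highestWeightMult (l₁ + l₂) m (k₁ + k₂) := by
  have : Nontrivial ↥(symWeightSpace l₂ m k₂ ⊓ LinearMap.ker (symLower m).toLinearMap) :=
    Module.finrank_pos_iff.1 h
  obtain ⟨⟨ψ, hψ, hψ'⟩, hne⟩ := exists_ne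
    (0 : ↥(symWeightSpace l₂ m k₂ ⊓ LinearMap.ker (symLower m).toLinearMap))
  have hψne : ψ ≠ 0 := fun h => hne (Subtype.ext h)
  have mul_mem : ∀ φ ∈ symWeightSpace l₁ m k₁ ⊓ LinearMap.ker (symLower m).toLinearMap,
      φ * ψ ∈ symWeightSpace (l₁ + l₂) m (k₁ + k₂) ⊓ LinearMap.ker (symLower m).toLinearMap := by
    rintro φ ⟨hφ, hφ'⟩
    refine ⟨IsWeightedHomogeneous.mul hφ hψ, ?_⟩
    rw [SetLike.mem_coe, LinearMap.mem_ker, Derivation.coeFn_coe] at *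
    rw [Derivation.leibniz, hφ', hψ', smul_zero, smul_zero, add_zero]
  refine LinearMap.finrank_le_finrank_of_injective
    (f := (LinearMap.mulRight ℚ ψ).restrict mul_mem) fun φ φ' h => ?_
  exact Subtype.ext (mul_right_cancel₀ hψne (congrArg Subtype.val h))

end highestWeightMult

end SymmetricPower

section AntisymmetricFunctions

variable {α : Type*} (K : Type*) [Field K]

/-- The functions supported on `s` and antisymmetric under `τ`. -/
def antisymmetricOn (τ : α → α) (s : Set α) : Submodule K (α → K) where
  carrier := {f | (∀ a ∉ s, f a = 0) ∧ ∀ a, f (τ a) = -f a}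
  zero_mem' := by simp
  add_mem' := fun ⟨hf, hf'⟩ ⟨hg, hg'⟩ =>
    ⟨fun a ha => by simp [hf a ha, hg a ha], fun a => by simp [hf', hg', add_comm]⟩
  smul_mem' c f := fun ⟨hf, hf'⟩ => ⟨fun a ha => by simp [hf a ha], fun a => by simp [hf']⟩

/-- The antisymmetrisation is a projection, so its trace is the dimension of its range. -/
theorem two_mul_finrank_antisymmetricOn_add_card [CharZero K] [Finite α] [DecidableEq α]
    {τ : α → α} (hτ : Function.Involutive τ) {s : Finset α} (hs : Set.MapsTo τ s s) :
    2 * Module.finrank K (antisymmetricOn K τ s) + #{a ∈ s | τ a = a} = #s := by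
  have := Fintype.ofFinite α
  have hs' {a : α} : τ a ∈ s ↔ a ∈ s := ⟨fun h => hτ a ▸ hs h, fun h => hs h⟩
  let proj : (α → K) →ₗ[K] α → K :=
    { toFun f a := if a ∈ s then (f a - f (τ a)) / 2 else 0
      map_add' f g := by ext a; dsimp only [Pi.add_apply]; split_ifs <;> ring
      map_smul' c f := by
        ext a
        dsimp only [Pi.smul_apply, RingHom.id_apply, smul_eq_mul]
        split_ifs <;> ring }
  have hproj : LinearMap.IsProj (antisymmetricOn K τ s) proj :=
    { map_mem f := by
        refine ⟨fun a ha => if_neg ha, fun a => ?_⟩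
        simp only [proj, LinearMap.coe_mk, AddHom.coe_mk, hs', hτ a]
        split_ifs <;> ring
      map_id f := fun ⟨hf, hf'⟩ => by
        ext a
        simp only [proj, LinearMap.coe_mk, AddHom.coe_mk, hf']
        split_ifs with ha
        · ring
        · exact (hf a ha).symm }
  have htrace := hproj.trace
  rw [LinearMap.trace_eq_matrix_trace K (Pi.basisFun K α), Matrix.trace] at htrace
  have hdiag (a : α) : (LinearMap.toMatrix (Pi.basisFun K α) (Pi.basisFun K α) proj).diag a =
      (if a ∈ s then 1 else 0) / 2 - (if a ∈ s ∧ τ a = a then 1 else 0) / 2 := by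
    rw [Matrix.diag_apply, LinearMap.toMatrix_apply, Pi.basisFun_apply, Pi.basisFun_repr]
    simp only [proj, LinearMap.coe_mk, AddHom.coe_mk, Pi.single_apply, ite_and]
    split_ifs <;> simp
  rw [sum_congr rfl fun a _ => hdiag a, sum_sub_distrib, ← sum_div, ← sum_div, sum_boole, sum_boole,
    filter_mem_eq_inter, univ_inter, ← filter_filter, filter_mem_eq_inter, univ_inter] at htrace
  rw [← Nat.cast_inj (R := K)]
  push_cast
  linear_combination -2 * htrace

end AntisymmetricFunctions

section HopOperators

variable {N : ℕ}

/-- Exchange the elements `s` and `s + 1`. -/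
def adjSwap (s : Fin N) (S : Finset (Fin (N + 1))) : Finset (Fin (N + 1)) :=
  S.map (Equiv.swap s.castSucc s.succ).toEmbedding

theorem mem_adjSwap {s : Fin N} {S : Finset (Fin (N + 1))} {i : Fin (N + 1)} :
    i ∈ adjSwap s S ↔ Equiv.swap s.castSucc s.succ i ∈ S := by
  rw [adjSwap, mem_map_equiv, Equiv.symm_swap]

theorem castSucc_mem_adjSwap {s : Fin N} {S : Finset (Fin (N + 1))} :
    s.castSucc ∈ adjSwap s S ↔ s.succ ∈ S := by
  rw [mem_adjSwap, Equiv.swap_apply_left]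

theorem succ_mem_adjSwap {s : Fin N} {S : Finset (Fin (N + 1))} :
    s.succ ∈ adjSwap s S ↔ s.castSucc ∈ S := by
  rw [mem_adjSwap, Equiv.swap_apply_right]

theorem adjSwap_adjSwap (s : Fin N) (S : Finset (Fin (N + 1))) :
    adjSwap s (adjSwap s S) = S := by
  ext i
  rw [mem_adjSwap, mem_adjSwap, Equiv.swap_apply_self]

theorem reflCompl_adjSwap (s : Fin N) (S : Finset (Fin (N + 1))) :
    reflCompl (adjSwap s S) = adjSwap s.rev (reflCompl S) := by
  ext i
  rw [mem_reflCompl, mem_adjSwap, mem_adjSwap, mem_reflCompl, ← Fin.rev_injective.swap_apply,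
    Fin.rev_castSucc, Fin.rev_succ, Fin.rev_rev, Equiv.swap_comm]

theorem sum_adjSwap {s : Fin N} {S : Finset (Fin (N + 1))} (hs : s.castSucc ∈ S)
    (hs' : s.succ ∉ S) : ∑ i ∈ adjSwap s S, (i : ℕ) = ∑ i ∈ S, (i : ℕ) + 1 := by
  have herase : ∀ i ∈ S.erase s.castSucc, (Equiv.swap s.castSucc s.succ i : ℕ) = i :=
    fun i hi => by
      rw [Equiv.swap_apply_of_ne_of_ne (ne_of_mem_erase hi)]
      rintro rfl
      exact hs' (mem_of_mem_erase hi)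
  rw [adjSwap, sum_map, ← add_sum_erase _ _ hs, ← add_sum_erase _ _ hs]
  simp only [Equiv.coe_toEmbedding]
  rw [sum_congr rfl herase, Equiv.swap_apply_left, Fin.val_succ, Fin.val_castSucc]
  ring

theorem adjSwap_mem_subsetsOfExcess {l k : ℕ} {s : Fin N} {S : Finset (Fin (N + 1))}
    (hs : s.castSucc ∈ S) (hs' : s.succ ∉ S) :
    adjSwap s S ∈ subsetsOfExcess (N + 1) l (k + 1) ↔ S ∈ subsetsOfExcess (N + 1) l k := by
  rw [mem_subsetsOfExcess, mem_subsetsOfExcess, sum_adjSwap hs hs', adjSwap, card_map]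
  omega

/-- `f ↦ f ∘ adjSwap s` on the sets containing `s` but not `s + 1`. -/
def hopLower (s : Fin N) :
    (Finset (Fin (N + 1)) → ℚ) →ₗ[ℚ] Finset (Fin (N + 1)) → ℚ where
  toFun f S := if s.castSucc ∈ S ∧ s.succ ∉ S then f (adjSwap s S) else 0
  map_add' f g := by ext S; simp only [Pi.add_apply]; split_ifs <;> simp
  map_smul' c f := by ext S; simp

/-- `f ↦ f ∘ adjSwap s` on the sets containing `s + 1` but not `s`. -/
def hopRaise (s : Fin N) :
    (Finset (Fin (N + 1)) → ℚ) →ₗ[ℚ] Finset (Fin (N + 1)) → ℚ where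
  toFun f S := if s.succ ∈ S ∧ s.castSucc ∉ S then f (adjSwap s S) else 0
  map_add' f g := by ext S; simp only [Pi.add_apply]; split_ifs <;> simp
  map_smul' c f := by ext S; simp

theorem hopLower_apply (s : Fin N) (f : Finset (Fin (N + 1)) → ℚ) (S : Finset (Fin (N + 1))) :
    hopLower s f S = if s.castSucc ∈ S ∧ s.succ ∉ S then f (adjSwap s S) else 0 := rfl

theorem hopRaise_apply (s : Fin N) (f : Finset (Fin (N + 1)) → ℚ) (S : Finset (Fin (N + 1))) :
    hopRaise s f S = if s.succ ∈ S ∧ s.castSucc ∉ S then f (adjSwap s S) else 0 := rfl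

theorem hopLower_hopRaise_comm {s t : Fin N} (hst : s ≠ t) (f : Finset (Fin (N + 1)) → ℚ) :
    hopLower s (hopRaise t f) = hopRaise t (hopLower s f) := by
  ext S
  simp only [hopLower_apply, hopRaise_apply]
  by_cases hst₁ : s.succ = t.castSucc
  · have hs : s.succ ∈ adjSwap t S ↔ t.succ ∈ S := by rw [hst₁, castSucc_mem_adjSwap]
    have ht : t.castSucc ∈ adjSwap s S ↔ s.castSucc ∈ S := by rw [← hst₁, succ_mem_adjSwap]
    split_ifs <;> first | rfl | tauto
  by_cases hst₂ : s.castSucc = t.succ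
  · have hs : s.castSucc ∈ adjSwap t S ↔ t.castSucc ∈ S := by rw [hst₂, succ_mem_adjSwap]
    have ht : t.succ ∈ adjSwap s S ↔ s.succ ∈ S := by rw [← hst₂, castSucc_mem_adjSwap]
    split_ifs <;> first | rfl | tauto
  have hcc : s.castSucc ≠ t.castSucc := Fin.castSucc_injective N |>.ne hst
  have hss : s.succ ≠ t.succ := Fin.succ_injective N |>.ne hst
  have hcomm : adjSwap t (adjSwap s S) = adjSwap s (adjSwap t S) := by
    ext i
    simp only [mem_adjSwap]
    rw [← (Equiv.injective (Equiv.swap s.castSucc s.succ)).swap_apply,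
      Equiv.swap_apply_of_ne_of_ne hcc.symm (Ne.symm hst₁),
      Equiv.swap_apply_of_ne_of_ne (Ne.symm hst₂) hss.symm]
  simp only [hcomm, mem_adjSwap, Equiv.swap_apply_of_ne_of_ne hcc hst₂,
    Equiv.swap_apply_of_ne_of_ne hst₁ hss, Equiv.swap_apply_of_ne_of_ne hcc.symm (Ne.symm hst₁),
    Equiv.swap_apply_of_ne_of_ne (Ne.symm hst₂) hss.symm]
  split_ifs <;> rfl

theorem hopLower_hopRaise_self (s : Fin N) (f : Finset (Fin (N + 1)) → ℚ)
    (S : Finset (Fin (N + 1))) :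
    hopLower s (hopRaise s f) S = hopRaise s (hopLower s f) S +
      ((if s.castSucc ∈ S then 1 else 0) - if s.succ ∈ S then 1 else 0) * f S := by
  simp only [hopLower_apply, hopRaise_apply, castSucc_mem_adjSwap, succ_mem_adjSwap,
    adjSwap_adjSwap]
  split_ifs <;> simp_all

/-- The weight of `hopRaise s` in the raising operator of the `l`-th exterior power of the
`(N + 1)`-dimensional irreducible representation of `sl₂`. -/
def hopWeight (s : Fin N) : ℚ := (s + 1) * (N - s)

theorem hopWeight_rev (s : Fin N) : hopWeight s.rev = hopWeight s := by
  have : (s.rev : ℚ) = N - (s + 1) := by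
    rw [Fin.val_rev, Nat.cast_sub s.is_lt, Nat.cast_succ]
  rw [hopWeight, hopWeight, this]
  ring

/-- The lowering operator on exterior powers, in the basis indexed by subsets. -/
def extLower (N : ℕ) : (Finset (Fin (N + 1)) → ℚ) →ₗ[ℚ] Finset (Fin (N + 1)) → ℚ :=
  ∑ s, hopLower s

/-- The raising operator on exterior powers, in the basis indexed by subsets. -/
def extRaise (N : ℕ) : (Finset (Fin (N + 1)) → ℚ) →ₗ[ℚ] Finset (Fin (N + 1)) → ℚ :=
  ∑ s, hopWeight s • hopRaise s

theorem sum_hopWeight_mul_sub {l k : ℕ} {S : Finset (Fin (N + 1))}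
    (hS : S ∈ subsetsOfExcess (N + 1) l k) :
    ∑ s : Fin N, hopWeight s *
      ((if s.castSucc ∈ S then 1 else 0) - if s.succ ∈ S then 1 else 0) =
        (l * (N + 1 - l) - 2 * k : ℚ) := by
  obtain ⟨hcard, hsum⟩ := mem_subsetsOfExcess.1 hS
  have hsum' : ∑ i ∈ S, ((i : ℕ) : ℚ) = k + ∑ i ∈ range l, (i : ℚ) := by
    rw [← Nat.cast_sum, hsum]
    push_cast
    rfl
  have hcast := Fin.sum_univ_castSucc fun i : Fin (N + 1) =>
    ((i : ℚ) + 1) * (N - i) * if i ∈ S then 1 else 0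
  have hsucc := Fin.sum_univ_succ fun i : Fin (N + 1) =>
    (i : ℚ) * (N - i + 1) * if i ∈ S then 1 else 0
  calc ∑ s : Fin N, hopWeight s * ((if s.castSucc ∈ S then 1 else 0) - if s.succ ∈ S then 1 else 0)
      = ∑ i : Fin (N + 1), ((i + 1) * (N - i) * (if i ∈ S then 1 else 0) -
          i * (N - i + 1) * if i ∈ S then 1 else 0 : ℚ) := by
        rw [sum_sub_distrib, hcast, hsucc]
        simp only [Fin.val_castSucc, Fin.val_succ, Fin.val_last, Fin.val_zero, Nat.cast_succ,
          Nat.cast_zero]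
        rw [sub_self, mul_zero, zero_mul, add_zero, zero_mul, zero_mul, zero_add,
          ← sum_sub_distrib]
        exact sum_congr rfl fun s _ => by rw [hopWeight]; ring
    _ = ∑ i ∈ S, (N - 2 * i : ℚ) := by
        rw [← univ_inter S, ← sum_ite_mem, univ_inter]
        refine sum_congr rfl fun i _ => ?_
        split_ifs <;> ring
    _ = l * (N + 1 - l) - 2 * k := by
        rw [sum_sub_distrib, ← mul_sum, hsum', sum_const, hcard, nsmul_eq_mul]
        linear_combination -sum_range_cast_mul_two ℚ l

theorem extLower_extRaise {l k : ℕ} {f : Finset (Fin (N + 1)) → ℚ}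
    (hf : ∀ S ∉ subsetsOfExcess (N + 1) l k, f S = 0) :
    extLower N (extRaise N f) = extRaise N (extLower N f) + (l * (N + 1 - l) - 2 * k : ℚ) • f := by
  let diag (s : Fin N) (S : Finset (Fin (N + 1))) : ℚ :=
    ((if s.castSucc ∈ S then 1 else 0) - if s.succ ∈ S then 1 else 0) * f S
  have hpair (s t : Fin N) : hopLower s (hopRaise t f) =
      hopRaise t (hopLower s f) + if s = t then diag t else 0 := by
    split_ifs with hst
    · subst hst
      exact funext (hopLower_hopRaise_self s f)
    · rw [hopLower_hopRaise_comm hst, add_zero]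
  have hdiag : ∑ s, hopWeight s • diag s = (l * (N + 1 - l) - 2 * k : ℚ) • f := by
    ext S
    simp only [Finset.sum_apply, Pi.smul_apply, smul_eq_mul, diag, ← mul_assoc, ← sum_mul]
    by_cases hS : S ∈ subsetsOfExcess (N + 1) l k
    · rw [sum_hopWeight_mul_sub hS]
    · rw [hf S hS, mul_zero, mul_zero]
  simp only [extLower, extRaise, LinearMap.sum_apply, LinearMap.smul_apply, map_sum, map_smul,
    hpair, smul_add, sum_add_distrib, sum_ite_eq', mem_univ, if_true, hdiag]
  simp only [smul_sum]
  rw [sum_comm]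

theorem hopLower_apply_reflCompl {f : Finset (Fin (N + 1)) → ℚ} (hf : ∀ S, f (reflCompl S) = -f S)
    (s : Fin N) (S : Finset (Fin (N + 1))) :
    hopLower s f (reflCompl S) = -hopLower s.rev f S := by
  have hrev : reflCompl (adjSwap s.rev S) = adjSwap s (reflCompl S) := by
    rw [reflCompl_adjSwap, Fin.rev_rev]
  simp only [hopLower_apply, ← hrev, hf, mem_reflCompl, Fin.rev_castSucc, Fin.rev_succ, not_not,
    and_comm]
  split_ifs <;> simp

theorem hopRaise_apply_reflCompl {f : Finset (Fin (N + 1)) → ℚ} (hf : ∀ S, f (reflCompl S) = -f S)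
    (s : Fin N) (S : Finset (Fin (N + 1))) :
    hopRaise s f (reflCompl S) = -hopRaise s.rev f S := by
  have hrev : reflCompl (adjSwap s.rev S) = adjSwap s (reflCompl S) := by
    rw [reflCompl_adjSwap, Fin.rev_rev]
  simp only [hopRaise_apply, ← hrev, hf, mem_reflCompl, Fin.rev_castSucc, Fin.rev_succ, not_not,
    and_comm]
  split_ifs <;> simp

theorem sum_range_card_le_sum {n : ℕ} (S : Finset (Fin n)) :
    ∑ i ∈ range #S, i ≤ ∑ i ∈ S, (i : ℕ) := by
  have := sum_range_le_sum (s := S.map (Fin.valEmbedding.trans Nat.castEmbedding)) (c := 0)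
    (by simp)
  rw [card_map, sum_map] at this
  zify
  simpa using this

theorem extLower_eq_zero {l : ℕ} {f : Finset (Fin (N + 1)) → ℚ}
    (hf : ∀ S ∉ subsetsOfExcess (N + 1) l 0, f S = 0) : extLower N f = 0 := by
  ext S
  rw [extLower, LinearMap.sum_apply, Finset.sum_apply, Pi.zero_apply]
  refine sum_eq_zero fun s _ => ?_
  rw [hopLower_apply]
  split_ifs with hs
  · refine hf _ fun hmem => ?_
    obtain ⟨hcard, hsum⟩ := mem_subsetsOfExcess.1 hmem
    rw [sum_adjSwap hs.1 hs.2] at hsum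
    rw [adjSwap, card_map] at hcard
    have := hcard ▸ sum_range_card_le_sum S
    omega
  · rfl

theorem extLower_mem_antisymmetricOn {l k : ℕ} {f : Finset (Fin (N + 1)) → ℚ}
    (hf : f ∈ antisymmetricOn ℚ reflCompl (subsetsOfExcess (N + 1) l (k + 1))) :
    extLower N f ∈ antisymmetricOn ℚ reflCompl (subsetsOfExcess (N + 1) l k) := by
  refine ⟨fun S hS => ?_, fun S => ?_⟩
  · rw [extLower, LinearMap.sum_apply, Finset.sum_apply]
    refine sum_eq_zero fun s _ => ?_
    rw [hopLower_apply]
    split_ifs with hs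
    · exact hf.1 _ (mt (adjSwap_mem_subsetsOfExcess hs.1 hs.2).1 hS)
    · rfl
  · simp only [extLower, LinearMap.sum_apply, Finset.sum_apply, hopLower_apply_reflCompl hf.2,
      sum_neg_distrib]
    rw [← Equiv.sum_comp Fin.revPerm fun s => hopLower s f S]
    rfl

theorem extRaise_mem_antisymmetricOn {l k : ℕ} {f : Finset (Fin (N + 1)) → ℚ}
    (hf : f ∈ antisymmetricOn ℚ reflCompl (subsetsOfExcess (N + 1) l k)) :
    extRaise N f ∈ antisymmetricOn ℚ reflCompl (subsetsOfExcess (N + 1) l (k + 1)) := by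
  refine ⟨fun S hS => ?_, fun S => ?_⟩
  · rw [extRaise, LinearMap.sum_apply, Finset.sum_apply]
    refine sum_eq_zero fun s _ => ?_
    rw [LinearMap.smul_apply, Pi.smul_apply, hopRaise_apply]
    split_ifs with hs
    · rw [hf.1, smul_zero]
      refine mt (adjSwap_mem_subsetsOfExcess (s := s) ?_ ?_).2 ?_
      · rw [castSucc_mem_adjSwap]; exact hs.1
      · rw [succ_mem_adjSwap]; exact hs.2
      · rwa [adjSwap_adjSwap]
    · exact smul_zero _
  · simp only [extRaise, LinearMap.sum_apply, LinearMap.smul_apply, Finset.sum_apply,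
      Pi.smul_apply, hopRaise_apply_reflCompl hf.2, smul_neg, sum_neg_distrib]
    rw [← Equiv.sum_comp Fin.revPerm fun s => hopWeight s • hopRaise s f S]
    simp only [Fin.revPerm_apply, hopWeight_rev]

theorem loweringRaising_ext {r : ℕ} (hN : N + 1 = r + r) :
    LoweringRaising (extLower N) (extRaise N)
      (fun k => antisymmetricOn ℚ reflCompl (subsetsOfExcess (N + 1) r k)) (r * r) where
  lower_zero _ hf := extLower_eq_zero hf.1
  lower_mem _ _ := extLower_mem_antisymmetricOn
  raise_mem _ _ := extRaise_mem_antisymmetricOn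
  commutator k f hf := by
    have hN' : (N + 1 : ℚ) = r + r := by exact_mod_cast hN
    rw [extLower_extRaise hf.1, hN', add_sub_cancel_right, Nat.cast_mul]

end HopOperators

section SelfConjugate

open Polynomial

/-- The generating function `∏ (1 + X ^ (2 i + 1))` over `i < r` of the self-conjugate partitions
in an `r × r` square, which are the sums of distinct odd hook lengths below `2 r`. -/
noncomputable def selfConjPoly (r : ℕ) : ℕ[X] := ∏ i ∈ range r, (1 + X ^ (2 * i + 1))

theorem coeff_selfConjPoly (r k : ℕ) :
    (selfConjPoly r).coeff k = #{T : Finset (Fin r) | ∑ i ∈ T, (2 * (i : ℕ) + 1) = k} := by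
  rw [selfConjPoly, ← Fin.prod_univ_eq_prod_range (fun i => 1 + (X : ℕ[X]) ^ (2 * i + 1)),
    prod_one_add, powerset_univ, finsetSum_coeff, card_filter]
  simp only [prod_pow_eq_pow_sum, coeff_X_pow, eq_comm]

theorem rev_mem_iff_of_reflCompl_eq_self {n : ℕ} {S : Finset (Fin n)} (hS : reflCompl S = S)
    (i : Fin n) : i.rev ∈ S ↔ i ∉ S := by
  conv_lhs => rw [← hS, mem_reflCompl, Fin.rev_rev]

theorem rev_natAdd_self {r : ℕ} (i : Fin r) : (Fin.natAdd r i).rev = Fin.castAdd r i.rev := by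
  rw [Fin.ext_iff, Fin.val_rev, Fin.val_natAdd, Fin.val_castAdd, Fin.val_rev]
  omega

theorem rev_castAdd_self {r : ℕ} (i : Fin r) : (Fin.castAdd r i).rev = Fin.natAdd r i.rev := by
  rw [Fin.rev_eq_iff, rev_natAdd_self, Fin.rev_rev]

theorem sum_eq_of_reflCompl_eq_self {r : ℕ} {S : Finset (Fin (r + r))} (hS : reflCompl S = S) :
    ∑ i ∈ S, (i : ℕ) = ∑ i : Fin r with Fin.natAdd r i ∈ S, (2 * (i : ℕ) + 1) +
      ∑ i ∈ range r, i := by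
  have hlower (i : Fin r) : Fin.castAdd r i.rev ∈ S ↔ Fin.natAdd r i ∉ S := by
    rw [← rev_natAdd_self, rev_mem_iff_of_reflCompl_eq_self hS]
  rw [← univ_inter S, ← sum_ite_mem, Fin.sum_univ_add, ← Fin.sum_univ_eq_sum_range (fun i => i),
    ← Equiv.sum_comp Fin.revPerm fun i => (i : ℕ), ← Equiv.sum_comp Fin.revPerm, sum_filter,
    ← sum_add_distrib, ← sum_add_distrib, univ_inter]
  refine sum_congr rfl fun i _ => ?_
  rw [Fin.revPerm_apply, if_congr (hlower i) rfl rfl, Fin.val_castAdd, Fin.val_natAdd, Fin.val_rev]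
  split_ifs <;> omega

theorem card_eq_of_reflCompl_eq_self {r : ℕ} {S : Finset (Fin (r + r))} (hS : reflCompl S = S) :
    #S = r := by
  have := congrArg card hS
  rw [reflCompl, card_compl, card_map, Fintype.card_fin] at this
  omega

open Classical in
/-- A set fixed by `reflCompl` is determined by its upper half, which is arbitrary. -/
theorem card_reflCompl_eq_self {n r : ℕ} (hn : n = r + r) (k : ℕ) :
    #{S ∈ subsetsOfExcess n r k | reflCompl S = S} = (selfConjPoly r).coeff k := by
  subst hn
  let upperHalf (S : Finset (Fin (r + r))) : Finset (Fin r) := {i | Fin.natAdd r i ∈ S}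
  let ofUpperHalf (T : Finset (Fin r)) : Finset (Fin (r + r)) :=
    {j | Fin.addCases (motive := fun _ => Prop) (fun i => i.rev ∉ T) (fun i => i ∈ T) j}
  have castAdd_mem (i : Fin r) (T) : Fin.castAdd r i ∈ ofUpperHalf T ↔ i.rev ∉ T := by
    simp only [ofUpperHalf, mem_filter, mem_univ, true_and, Fin.addCases_left]
  have natAdd_mem (i : Fin r) (T) : Fin.natAdd r i ∈ ofUpperHalf T ↔ i ∈ T := by
    simp only [ofUpperHalf, mem_filter, mem_univ, true_and, Fin.addCases_right]
  have mem_upperHalf (i : Fin r) (S) : i ∈ upperHalf S ↔ Fin.natAdd r i ∈ S := by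
    simp only [upperHalf, mem_filter, mem_univ, true_and]
  have hfix (T : Finset (Fin r)) : reflCompl (ofUpperHalf T) = ofUpperHalf T := by
    ext j
    rw [mem_reflCompl]
    cases j using Fin.addCases with
    | left i => rw [rev_castAdd_self, natAdd_mem, castAdd_mem]
    | right i => rw [rev_natAdd_self, natAdd_mem, castAdd_mem, Fin.rev_rev, not_not]
  have hupper (T : Finset (Fin r)) : upperHalf (ofUpperHalf T) = T := by
    ext i
    rw [mem_upperHalf, natAdd_mem]
  rw [coeff_selfConjPoly]
  refine card_nbij' upperHalf ofUpperHalf (fun S hS => ?_) (fun T hT => ?_) (fun S hS => ?_)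
    fun T _ => hupper T
  · obtain ⟨hS, hfixS⟩ := mem_filter.1 hS
    rw [mem_subsetsOfExcess, sum_eq_of_reflCompl_eq_self hfixS] at hS
    exact mem_filter.2 ⟨mem_univ _, add_right_cancel hS.2⟩
  · refine mem_filter.2 ⟨mem_subsetsOfExcess.2 ⟨card_eq_of_reflCompl_eq_self (hfix T), ?_⟩, hfix T⟩
    rw [sum_eq_of_reflCompl_eq_self (hfix T)]
    have hsum : ∑ i ∈ upperHalf (ofUpperHalf T), (2 * (i : ℕ) + 1) = k := by
      rw [hupper]
      exact (mem_filter.1 hT).2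
    exact congrArg (· + _) hsum
  · obtain ⟨-, hfixS⟩ := mem_filter.1 hS
    ext j
    cases j using Fin.addCases with
    | left i =>
      rw [castAdd_mem, mem_upperHalf, ← rev_castAdd_self, rev_mem_iff_of_reflCompl_eq_self hfixS,
        not_not]
    | right i => rw [natAdd_mem, mem_upperHalf]

end SelfConjugate

/-- Half the number of non-self-conjugate partitions of `k` is the dimension of the antisymmetric
part of a weight space of `sl₂`, which grows with `k` below the middle. -/
theorem coeff_selfConjPoly_succ_le {r k : ℕ} (hk : 2 * (k + 1) ≤ r * r) :
    (selfConjPoly r).coeff (k + 1) ≤ highestWeightMult r r (k + 1) + (selfConjPoly r).coeff k := by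
  obtain ⟨N, hN⟩ : ∃ N, N + 1 = r + r := ⟨r + r - 1, by
    have : r ≠ 0 := by rintro rfl; omega
    omega⟩
  have hdim (j : ℕ) : 2 * Module.finrank ℚ (antisymmetricOn ℚ reflCompl
      (subsetsOfExcess (N + 1) r j : Set (Finset (Fin (N + 1))))) + (selfConjPoly r).coeff j =
        (gaussBinom r r).coeff j := by
    rw [← card_reflCompl_eq_self hN, ← card_subsetsOfExcess hN]
    exact two_mul_finrank_antisymmetricOn_add_card ℚ (reflCompl_involutive _)
      fun S hS => reflCompl_mem_subsetsOfExcess hN hS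
  have hmono := (loweringRaising_ext hN).finrank_inf_ker_add_finrank (j := k) (by omega)
  have hmult := highestWeightMult.succ_add_coeff hk
  have := hdim k
  have := hdim (k + 1)
  omega

section KroneckerSubstitution

open Polynomial

theorem eval_eq_coeff_zero_add_mul (p : ℕ[X]) (x : ℕ) :
    p.eval x = p.coeff 0 + x * p.divX.eval x := by
  conv_lhs => rw [← divX_mul_X_add p]
  rw [eval_add, eval_mul, eval_X, eval_C, add_comm, mul_comm]

theorem coeff_eq_eval_div_pow_mod {p : ℕ[X]} {x : ℕ} (hp : ∀ i, p.coeff i < x) (k : ℕ) :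
    p.coeff k = p.eval x / x ^ k % x := by
  induction k generalizing p with
  | zero =>
    rw [pow_zero, Nat.div_one, eval_eq_coeff_zero_add_mul, Nat.add_mul_mod_self_left,
      Nat.mod_eq_of_lt (hp 0)]
  | succ k ih =>
    rw [pow_succ', ← Nat.div_div_eq_div_mul, eval_eq_coeff_zero_add_mul,
      Nat.add_mul_div_left _ _ (Nat.zero_lt_of_lt (hp 0)), Nat.div_eq_of_lt (hp 0), zero_add,
      ← ih fun i => coeff_divX (p := p) ▸ hp (i + 1), coeff_divX]

theorem coeff_le_eval_one (p : ℕ[X]) (k : ℕ) : p.coeff k ≤ p.eval 1 := by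
  rw [eval_eq_sum_range' (p.natDegree.lt_succ_self.trans_le (le_max_left _ (k + 1)))]
  simp only [one_pow, mul_one]
  exact single_le_sum_of_canonicallyOrdered (mem_range.2 (lt_max_of_lt_right k.lt_succ_self))

theorem eval_one_gaussBinom_le (l m : ℕ) : (gaussBinom l m).eval 1 ≤ 2 ^ (l + m) := by
  induction l, m using gaussBinom.induct with
  | case1 m => simpa only [gaussBinom.zero_left, eval_one] using Nat.one_le_two_pow
  | case2 l => simpa only [gaussBinom.zero_right, eval_one] using Nat.one_le_two_pow
  | case3 l m ih₁ ih₂ =>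
    rw [gaussBinom.succ_succ, eval_add, eval_mul, eval_pow, eval_X, one_pow, one_mul,
      show l.succ + m.succ = l + 1 + m + 1 by omega, pow_succ, mul_two]
    exact add_le_add ih₁ (ih₂.trans_eq (by ring))

/-- The `k`-th coefficient of `gaussBinom l m`, read off as a digit of its value at
`2 ^ (l + m + 1)` so that it can be evaluated by integer arithmetic. -/
def gaussBinomDigit (l m k : ℕ) : ℕ :=
  let x := 2 ^ (l + m + 1)
  qFactorial x (l + m) / (qFactorial x l * qFactorial x m) / x ^ k % x

theorem coeff_gaussBinom_eq_digit (l m k : ℕ) :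
    (gaussBinom l m).coeff k = gaussBinomDigit l m k := by
  have one_lt_base : 1 < 2 ^ (l + m + 1) := Nat.one_lt_two_pow (l + m).succ_ne_zero
  have qFactorial_pos (n : ℕ) : 0 < qFactorial (2 ^ (l + m + 1)) n :=
    prod_pos fun i _ => Nat.sub_pos_of_lt (Nat.one_lt_pow i.succ_ne_zero one_lt_base)
  have coeff_lt (i : ℕ) : (gaussBinom l m).coeff i < 2 ^ (l + m + 1) :=
    ((coeff_le_eval_one _ i).trans (eval_one_gaussBinom_le l m)).trans_lt
      (Nat.pow_lt_pow_right one_lt_two (l + m).lt_succ_self)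
  rw [coeff_eq_eval_div_pow_mod coeff_lt, gaussBinomDigit,
    ← eval_gaussBinom_mul_qFactorial one_lt_base.le,
    Nat.mul_div_cancel _ (Nat.mul_pos (qFactorial_pos l) (qFactorial_pos m))]

/-- The difference of the two central coefficients of `selfConjPoly (2 q)`, whose degree is
`4 q ^ 2`. -/
noncomputable def selfConjGap (q : ℕ) : ℤ :=
  (selfConjPoly (2 * q)).coeff (2 * q ^ 2) - (selfConjPoly (2 * q)).coeff (2 * q ^ 2 - 1)

/-- The value of `selfConjGap q`, read off from the digits of the value of `selfConjPoly (2 q)`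
at `2 ^ (2 q + 1)`. -/
def selfConjGapDigits (q : ℕ) : ℤ :=
  let x := 2 ^ (2 * q + 1)
  let N := ∏ i ∈ range (2 * q), (1 + x ^ (2 * i + 1))
  (N / x ^ (2 * q ^ 2) % x : ℕ) - (N / x ^ (2 * q ^ 2 - 1) % x : ℕ)

theorem eval_selfConjPoly (r x : ℕ) :
    (selfConjPoly r).eval x = ∏ i ∈ range r, (1 + x ^ (2 * i + 1)) := by
  simp only [selfConjPoly, eval_prod, eval_add, eval_one, eval_pow, eval_X]

theorem selfConjGap_eq_digits (q : ℕ) : selfConjGap q = selfConjGapDigits q := by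
  have coeff_lt (i : ℕ) : (selfConjPoly (2 * q)).coeff i < 2 ^ (2 * q + 1) := by
    refine (coeff_le_eval_one _ i).trans_lt ?_
    rw [eval_selfConjPoly, pow_succ]
    simp only [one_pow, one_add_one_eq_two, prod_const, card_range]
    exact lt_mul_of_one_lt_right (by positivity) one_lt_two
  rw [selfConjGap, coeff_eq_eval_div_pow_mod coeff_lt, coeff_eq_eval_div_pow_mod coeff_lt,
    eval_selfConjPoly, selfConjGapDigits]

end KroneckerSubstitution

theorem selfConjGap_le_highestWeightMult_square {q : ℕ} (hq : q ≠ 0) :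
    selfConjGap q ≤ highestWeightMult (2 * q) (2 * q) (2 * q ^ 2) := by
  obtain ⟨k, hk⟩ : ∃ k, 2 * q ^ 2 = k + 1 := Nat.exists_eq_succ_of_ne_zero (by positivity)
  have := coeff_selfConjPoly_succ_le (r := 2 * q) (k := k) (by rw [← hk]; linarith)
  rw [selfConjGap, hk, Nat.add_sub_cancel]
  omega

theorem selfConjGap_twelve : selfConjGap 12 = 50 := by
  rw [selfConjGap_eq_digits]
  decide +kernel

set_option maxRecDepth 100000 in
set_option exponentiation.threshold 100000000 in
theorem two_pow_le_selfConjGap_of_lt {q : ℕ} (hq : 16 ≤ q) (hq' : q < 64) :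
    (2 : ℝ) ^ (2 * q) ≤ 3 * selfConjGap q * √(2 * q) ^ 9 := by
  have digits_check : ∀ q ∈ Ico 16 64, 0 ≤ selfConjGapDigits q ∧
      (2 ^ (2 * q)) ^ 2 ≤ (3 * selfConjGapDigits q) ^ 2 * (2 * q) ^ 9 := by
    decide +kernel
  obtain ⟨gap_nonneg, hsq⟩ := digits_check q (mem_Ico.2 ⟨hq, hq'⟩)
  rw [← selfConjGap_eq_digits] at gap_nonneg hsq
  have : (0 : ℝ) ≤ selfConjGap q := by exact_mod_cast gap_nonneg
  refine le_of_sq_le_sq ?_ (by positivity)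
  rw [mul_pow _ (_ ^ 9), pow_right_comm (√_), Real.sq_sqrt (by positivity)]
  exact_mod_cast hsq

section StrictUnimodality

/-- The coefficients of the Gaussian binomial coefficient of an `l × m` rectangle increase strictly
up to the middle, except from degree `0` to degree `1`. -/
def StrictUnimodal (l m : ℕ) : Prop :=
  ∀ ⦃k⦄, k ≠ 1 → 2 * k ≤ l * m → 1 ≤ highestWeightMult l m k

theorem exists_add_eq_of_le_add {M₁ M₂ k : ℕ} (hM₁ : 3 ≤ M₁) (hM₂ : 2 ≤ M₂) (hk : k ≠ 1)
    (hkM : k ≤ M₁ + M₂) : ∃ k₁ k₂, k₁ + k₂ = k ∧ k₁ ≠ 1 ∧ k₂ ≠ 1 ∧ k₁ ≤ M₁ ∧ k₂ ≤ M₂ := by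
  rcases le_or_gt k M₁ with hle | hlt
  · exact ⟨k, 0, by omega⟩
  rcases eq_or_ne k (M₁ + 1) with rfl | hne
  · exact ⟨M₁ - 1, 2, by omega⟩
  · exact ⟨M₁, k - M₁, by omega⟩

namespace StrictUnimodal

theorem symm {l m : ℕ} (h : StrictUnimodal l m) : StrictUnimodal m l := fun k hk hkm => by
  rw [highestWeightMult.comm hkm]
  exact h hk (mul_comm l m ▸ hkm)

/-- Pak and Panova's semigroup property. -/
theorem add {l₁ l₂ m : ℕ} (h₁ : StrictUnimodal l₁ m) (h₂ : StrictUnimodal l₂ m)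
    (hl₁ : 6 ≤ l₁ * m) (hl₂ : 4 ≤ l₂ * m) (heven : Even l₂) : StrictUnimodal (l₁ + l₂) m := by
  intro k hk hkm
  obtain ⟨c, hc⟩ := heven.mul_right m
  rw [add_mul] at hkm
  obtain ⟨k₁, k₂, rfl, hk₁, hk₂, hle₁, hle₂⟩ := exists_add_eq_of_le_add
    (M₁ := l₁ * m / 2) (M₂ := l₂ * m / 2) (k := k) (by omega) (by omega) hk (by omega)
  exact (h₁ hk₁ (by omega)).trans (highestWeightMult.le_add (h₂ hk₂ (by omega)))

set_option maxRecDepth 100000 in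
theorem of_small {l m : ℕ} (hl : l ∈ Icc 5 15) (hm : m ∈ Icc 8 22)
    (hlm : 8 ≤ l ∨ m = 8 ∨ 15 ≤ m) : StrictUnimodal l m := by
  have digits_check : ∀ l ∈ Icc 5 15, ∀ m ∈ Icc 8 22, 8 ≤ l ∨ m = 8 ∨ 15 ≤ m →
      ∀ k ∈ Icc 1 (l * m / 2), k ≠ 1 → gaussBinomDigit l m (k - 1) < gaussBinomDigit l m k := by
    decide +kernel
  intro k hk hkm
  cases k with
  | zero => exact (highestWeightMult.zero l m).ge
  | succ k =>
    have := digits_check l hl m hm hlm (k + 1) (mem_Icc.2 (by omega)) hk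
    rw [Nat.add_sub_cancel, ← coeff_gaussBinom_eq_digit, ← coeff_gaussBinom_eq_digit,
      ← highestWeightMult.succ_add_coeff hkm] at this
    omega

theorem of_le {l m : ℕ} (hl : 5 ≤ l) (hm : 8 ≤ m) (hlm : 8 ≤ l ∨ 15 ≤ m) :
    StrictUnimodal l m := by
  have of_le_fifteen {l m : ℕ} (hl : l ∈ Icc 5 15) (hm : 8 ≤ m) (hlm : 8 ≤ l ∨ 15 ≤ m) :
      StrictUnimodal l m := by
    induction m using Nat.strong_induction_on with
    | _ m ih =>
      have hl' := mem_Icc.1 hl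
      rcases le_or_gt m 22 with hle | hlt
      · exact of_small hl (mem_Icc.2 ⟨hm, hle⟩) (by omega)
      obtain ⟨m, rfl⟩ := Nat.exists_eq_add_of_le' hm
      exact (add (ih m (by omega) (by omega) (by omega)).symm
        (of_small hl (by decide) (by omega)).symm (by nlinarith) (by omega) (by decide)).symm
  induction l using Nat.strong_induction_on with
  | _ l ih =>
    rcases le_or_gt l 15 with hle | hlt
    · exact of_le_fifteen (mem_Icc.2 ⟨hl, hle⟩) hm hlm
    obtain ⟨l, rfl⟩ := Nat.exists_eq_add_of_le' (show 8 ≤ l by omega)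
    exact add (ih l (by omega) (by omega) (by omega)) (of_le_fifteen (by decide) hm (by omega))
      (by nlinarith) (by omega) (by decide)

end StrictUnimodal

theorem highestWeightMult_square_le {q l m k : ℕ} (hq : 8 ≤ q) (hl : 2 * q + 5 ≤ l)
    (hm : 2 * q + 5 ≤ m) (hk : 2 * q ^ 2 + 2 ≤ k) (hkm : 2 * k ≤ l * m) :
    highestWeightMult (2 * q) (2 * q) (2 * q ^ 2) ≤ highestWeightMult l m k := by
  obtain ⟨u, rfl⟩ := Nat.exists_eq_add_of_le (show 2 * q ≤ l by omega)
  obtain ⟨v, rfl⟩ := Nat.exists_eq_add_of_le (show 2 * q ≤ m by omega)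
  have hsplit : (2 * q + u) * (2 * q + v) = 4 * q ^ 2 + 2 * (v * q) + u * (2 * q + v) := by ring
  have hu : 5 * 15 ≤ u * (2 * q + v) := Nat.mul_le_mul (by omega) (by omega)
  have hv : 5 * 8 ≤ v * q := Nat.mul_le_mul (by omega) hq
  obtain ⟨k₁, k₂, hadd, hk₁, hk₂, hle₁, hle₂⟩ := exists_add_eq_of_le_add
    (M₁ := v * q) (M₂ := u * (2 * q + v) / 2) (k := k - 2 * q ^ 2)
    (by omega) (by omega) (by omega) (by omega)
  have hkm₁ : 2 * k₁ ≤ v * (2 * q) := by linarith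
  have hpos₁ := StrictUnimodal.of_le (l := v) (m := 2 * q) (by omega) (by omega) (by omega) hk₁ hkm₁
  have hpos₂ := StrictUnimodal.of_le (l := u) (m := 2 * q + v) (by omega) (by omega) (by omega) hk₂
    (by omega)
  calc highestWeightMult (2 * q) (2 * q) (2 * q ^ 2)
      ≤ highestWeightMult (2 * q + v) (2 * q) (2 * q ^ 2 + k₁) := highestWeightMult.le_add hpos₁
    _ = highestWeightMult (2 * q) (2 * q + v) (2 * q ^ 2 + k₁) :=
        highestWeightMult.comm (by linarith)
    _ ≤ highestWeightMult (2 * q + u) (2 * q + v) (2 * q ^ 2 + k₁ + k₂) :=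
        highestWeightMult.le_add hpos₂
    _ = highestWeightMult (2 * q + u) (2 * q + v) k := by congr 1; omega

theorem selfConjGap_le_highestWeightMult {q l m k : ℕ} (hq : 8 ≤ q) (hl : 2 * q + 5 ≤ l)
    (hm : 2 * q + 5 ≤ m) (hk : 2 * q ^ 2 + 2 ≤ k) (hkm : 2 * k ≤ l * m) :
    selfConjGap q ≤ highestWeightMult l m k :=
  (selfConjGap_le_highestWeightMult_square (by omega)).trans <| by
    exact_mod_cast highestWeightMult_square_le hq hl hm hk hkm

end StrictUnimodality

section FourierKernel

open Real

/-- The Fourier kernel `∏ cos ((2 j + 1) θ / 2)` over `j < r`: the value of `selfConjPoly r` at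
`exp (i θ)` is `2 ^ r * exp (i r ^ 2 θ / 2) * cosProd r θ`. -/
noncomputable def cosProd (r : ℕ) (θ : ℝ) : ℝ := ∏ j ∈ range r, cos ((2 * j + 1) * θ / 2)

theorem continuous_cosProd (r : ℕ) : Continuous (cosProd r) := by
  unfold cosProd
  fun_prop

theorem two_pow_card_mul_prod_cos_mul_cos {ι : Type*} (s : Finset ι) (a : ι → ℝ) (φ : ℝ) :
    2 ^ #s * (∏ j ∈ s, cos (a j)) * cos φ =
      ∑ T ∈ s.powerset, cos (φ + ∑ j ∈ s, a j - 2 * ∑ j ∈ T, a j) := by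
  classical
  induction s using Finset.induction generalizing φ with
  | empty => simp
  | insert i s hi ih =>
    have hsplit : 2 * cos (a i) * cos φ = cos (φ + a i) + cos (φ - a i) := by
      rw [cos_add, cos_sub]
      ring
    calc 2 ^ #(insert i s) * (∏ j ∈ insert i s, cos (a j)) * cos φ
        = 2 ^ #s * (∏ j ∈ s, cos (a j)) * cos (φ + a i) +
            2 ^ #s * (∏ j ∈ s, cos (a j)) * cos (φ - a i) := by
          rw [card_insert_of_notMem hi, prod_insert hi, ← mul_add, ← hsplit]
          ring
      _ = _ := by
          rw [ih, ih, sum_powerset_insert hi, sum_insert hi]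
          refine congrArg₂ (· + ·) (sum_congr rfl fun T _ => ?_) (sum_congr rfl fun T hT => ?_)
          · congr 1
            ring
          · rw [sum_insert fun hiT => hi (mem_powerset.1 hT hiT)]
            congr 1
            ring

theorem two_pow_mul_cosProd_mul_cos (r k : ℕ) (θ : ℝ) :
    2 ^ r * cosProd r θ * cos ((k - r ^ 2 / 2) * θ) =
      ∑ T : Finset (Fin r), cos (((k - (∑ j ∈ T, (2 * (j : ℕ) + 1) : ℕ) : ℤ) : ℝ) * θ) := by
  have hsum : ∑ j : Fin r, (2 * (j : ℝ) + 1) * θ / 2 = r ^ 2 / 2 * θ := by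
    rw [← sum_div, ← sum_mul, sum_add_distrib, ← mul_sum,
      Fin.sum_univ_eq_sum_range (fun j => (j : ℝ)), mul_comm 2, sum_range_cast_mul_two]
    simp
    ring
  have hprod := two_pow_card_mul_prod_cos_mul_cos univ (fun j : Fin r => (2 * (j : ℝ) + 1) * θ / 2)
    ((k - r ^ 2 / 2) * θ)
  rw [card_univ, Fintype.card_fin, powerset_univ, hsum,
    Fin.prod_univ_eq_prod_range (fun j => cos ((2 * (j : ℝ) + 1) * θ / 2))] at hprod
  rw [cosProd, hprod]
  refine sum_congr rfl fun T _ => congrArg cos ?_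
  push_cast
  rw [← sum_div, ← sum_mul]
  ring

theorem integral_cos_int_mul (z : ℤ) :
    ∫ θ in (0 : ℝ)..π, cos (z * θ) = if z = 0 then π else 0 := by
  split_ifs with hz
  · simp [hz]
  · rw [intervalIntegral.integral_comp_mul_left _ (Int.cast_ne_zero.2 hz), integral_cos,
      sin_int_mul_pi, mul_zero, sin_zero, sub_zero, smul_zero]

theorem integral_cosProd_mul_cos (r k : ℕ) :
    ∫ θ in (0 : ℝ)..π, 2 ^ r * cosProd r θ * cos ((k - r ^ 2 / 2) * θ) =
      π * (selfConjPoly r).coeff k := by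
  simp only [two_pow_mul_cosProd_mul_cos]
  rw [intervalIntegral.integral_finsetSum
    fun T _ => Continuous.intervalIntegrable (by fun_prop) _ _]
  simp only [integral_cos_int_mul, sub_eq_zero, Nat.cast_inj]
  rw [coeff_selfConjPoly, card_filter, Nat.cast_sum, mul_sum]
  refine sum_congr rfl fun T _ => ?_
  rw [if_congr eq_comm rfl rfl, Nat.cast_ite, mul_ite, Nat.cast_one, mul_one, Nat.cast_zero,
    mul_zero]

theorem pi_mul_selfConjGap {q : ℕ} (hq : q ≠ 0) :
    π * selfConjGap q = 2 ^ (2 * q) * ∫ θ in (0 : ℝ)..π, cosProd (2 * q) θ * (1 - cos θ) := by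
  have hcenter := integral_cosProd_mul_cos (2 * q) (2 * q ^ 2)
  have hbelow := integral_cosProd_mul_cos (2 * q) (2 * q ^ 2 - 1)
  have hcast : ((2 * q ^ 2 - 1 : ℕ) : ℝ) = 2 * q ^ 2 - 1 := by
    rw [Nat.cast_sub (by have := Nat.pos_of_ne_zero hq; nlinarith)]
    push_cast
    rfl
  have hcont := continuous_cosProd (2 * q)
  rw [selfConjGap, Int.cast_sub, mul_sub, Int.cast_natCast, Int.cast_natCast, ← hcenter, ← hbelow,
    ← intervalIntegral.integral_sub (Continuous.intervalIntegrable (by fun_prop) _ _)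
      (Continuous.intervalIntegrable (by fun_prop) _ _), ← intervalIntegral.integral_const_mul]
  refine intervalIntegral.integral_congr fun θ _ => ?_
  have hphase : ((2 * q ^ 2 : ℕ) - ((2 * q : ℕ) : ℝ) ^ 2 / 2) * θ = 0 := by push_cast; ring
  have hphase' : ((2 * q ^ 2 - 1 : ℕ) - ((2 * q : ℕ) : ℝ) ^ 2 / 2) * θ = -θ := by
    rw [hcast]
    push_cast
    ring
  simp only [hphase, hphase', cos_zero, cos_neg]
  ring

theorem four_mul_sin_mul_sum_sin_sq (r : ℕ) (θ : ℝ) :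
    4 * sin θ * ∑ j ∈ range r, sin ((2 * j + 1) * θ / 2) ^ 2 =
      2 * r * sin θ - sin (2 * r * θ) := by
  induction r with
  | zero => simp
  | succ r ih =>
    have hsq : sin ((2 * r + 1) * θ / 2) ^ 2 = 1 / 2 - cos (2 * r * θ + θ) / 2 := by
      rw [sin_sq_eq_half_sub]
      ring_nf
    have hnext : sin (2 * (r + 1 : ℕ) * θ) = sin (2 * r * θ + θ + θ) := by
      push_cast
      ring_nf
    have hprev : sin (2 * r * θ) = sin (2 * r * θ + θ - θ) := by ring_nf
    rw [sum_range_succ, mul_add, ih, hsq, hnext, hprev, sin_add (2 * r * θ + θ),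
      sin_sub (2 * r * θ + θ)]
    push_cast
    ring

theorem sin_le_sin_of_le_of_le_pi_sub {x θ : ℝ} (hx : 0 ≤ x) (hθ : x ≤ θ) (hθ' : θ ≤ π - x) :
    sin x ≤ sin θ := by
  rcases le_total θ (π / 2) with h | h
  · exact sin_le_sin_of_le_of_le_pi_div_two (by linarith [pi_pos]) h hθ
  · rw [← sin_pi_sub θ]
    exact sin_le_sin_of_le_of_le_pi_div_two (by linarith [pi_pos]) (by linarith) (by linarith)

theorem three_halves_le_mul_sin_pi_div {r : ℝ} (hr : 4 ≤ r) : 3 / 2 ≤ r * sin (π / (2 * r)) := by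
  have hsin := sin_ge_sub_cube (x := π / (2 * r)) (by positivity)
  have hπ : (π / 2) * (1 - (π / (2 * r)) ^ 2 / 6) = r * (π / (2 * r) - (π / (2 * r)) ^ 3 / 6) := by
    field_simp
  have hsmall : π / (2 * r) ≤ 0.4 := by
    rw [div_le_iff₀ (by positivity)]
    linarith [pi_lt_d2]
  have hsq : (π / (2 * r)) ^ 2 ≤ 0.4 ^ 2 := pow_le_pow_left₀ (by positivity) hsmall 2
  calc 3 / 2 ≤ (π / 2) * (1 - (π / (2 * r)) ^ 2 / 6) := by nlinarith [pi_gt_d2]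
    _ ≤ r * sin (π / (2 * r)) := by rw [hπ]; gcongr

theorem sin_two_mul_mul_le {r : ℕ} {θ : ℝ} (hr : 4 ≤ r) (hθ : π / (2 * r) ≤ θ) (hθ' : θ ≤ π) :
    sin (2 * r * θ) ≤ 2 / 3 * r * sin θ := by
  have hr' : (4 : ℝ) ≤ r := by exact_mod_cast hr
  have hx : 0 ≤ π / (2 * r) := by positivity
  rcases le_total θ (π - π / (2 * r)) with h | h
  · have hsin := sin_le_sin_of_le_of_le_pi_sub hx hθ h
    have := three_halves_le_mul_sin_pi_div hr'
    calc sin (2 * r * θ) ≤ 1 := sin_le_one _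
      _ ≤ 2 / 3 * r * sin (π / (2 * r)) := by linarith
      _ ≤ 2 / 3 * r * sin θ := by gcongr
  · have hreflect : sin (2 * r * θ) = -sin (2 * r * (π - θ)) := by
      rw [← sin_neg, ← sin_add_nat_mul_two_pi (-(2 * r * (π - θ))) r]
      ring_nf
    have hnonneg : 0 ≤ sin (2 * r * (π - θ)) := by
      refine sin_nonneg_of_nonneg_of_le_pi (mul_nonneg (by positivity) (by linarith)) ?_
      calc 2 * r * (π - θ) ≤ 2 * r * (π / (2 * r)) := by gcongr; linarith
        _ = π := by field_simp
    have := sin_nonneg_of_nonneg_of_le_pi (hx.trans hθ) hθ'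
    have : 0 ≤ 2 / 3 * r * sin θ := by positivity
    linarith

theorem prod_le_one_of_sum_le_card {ι : Type*} {s : Finset ι} {f : ι → ℝ} (hf : ∀ i ∈ s, 0 ≤ f i)
    (hsum : ∑ i ∈ s, f i ≤ #s) : ∏ i ∈ s, f i ≤ 1 :=
  calc ∏ i ∈ s, f i ≤ ∏ i ∈ s, exp (f i - 1) :=
        prod_le_prod hf fun i _ => by linarith [add_one_le_exp (f i - 1)]
    _ = exp (∑ i ∈ s, f i - #s) := by
        rw [← exp_sum, sum_sub_distrib, sum_const, nsmul_eq_mul, mul_one]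
    _ ≤ 1 := exp_le_one_iff.2 (by linarith)

theorem cosProd_sq_le {r : ℕ} {θ : ℝ} (hr : 4 ≤ r) (hθ : π / (2 * r) ≤ θ) (hθ' : θ ≤ π) :
    cosProd r θ ^ 2 ≤ (2 / 3) ^ r := by
  have : (0 : ℝ) < r := by exact_mod_cast (by omega : 0 < r)
  have hθ₀ : 0 < θ := lt_of_lt_of_le (by positivity) hθ
  rcases hθ'.eq_or_lt with rfl | hlt
  · rw [cosProd, prod_eq_zero (mem_range.2 (by omega : 0 < r)) (by simp), zero_pow two_ne_zero]
    positivity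
  have hsin : 0 < sin θ := sin_pos_of_pos_of_lt_pi hθ₀ hlt
  have hsum_sin : r / 3 ≤ ∑ j ∈ range r, sin ((2 * j + 1) * θ / 2) ^ 2 := by
    refine le_of_mul_le_mul_left ?_ (by positivity : 0 < 4 * sin θ)
    rw [four_mul_sin_mul_sum_sin_sq]
    linarith [sin_two_mul_mul_le hr hθ hθ']
  have hprod : ∏ j ∈ range r, (3 / 2 * cos ((2 * j + 1) * θ / 2) ^ 2) ≤ 1 := by
    refine prod_le_one_of_sum_le_card (fun j _ => by positivity) ?_
    simp only [← mul_sum, cos_sq', sum_sub_distrib, sum_const, card_range, nsmul_eq_mul, mul_one]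
    linarith
  rw [prod_mul_distrib, prod_const, card_range, prod_pow] at hprod
  calc cosProd r θ ^ 2 = (2 / 3) ^ r * ((3 / 2) ^ r * cosProd r θ ^ 2) := by
        rw [← mul_assoc, ← mul_pow]
        norm_num
    _ ≤ (2 / 3) ^ r := mul_le_of_le_one_right (by positivity) hprod

theorem cosProd_nonneg {r : ℕ} {θ : ℝ} (hθ : 0 ≤ θ) (hθ' : θ ≤ π / (2 * r)) : 0 ≤ cosProd r θ := by
  refine prod_nonneg fun j hj => ?_
  have hj' : (j : ℝ) + 1 ≤ r := by exact_mod_cast mem_range.1 hj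
  have hr : (0 : ℝ) < r := by linarith [(Nat.cast_nonneg j : (0 : ℝ) ≤ j)]
  have hrθ : θ * (2 * r) ≤ π := (le_div_iff₀ (by positivity)).1 hθ'
  refine cos_nonneg_of_neg_pi_div_two_le_of_le ?_ (by nlinarith)
  have : 0 ≤ (2 * (j : ℝ) + 1) * θ / 2 := by positivity
  linarith [pi_pos]

theorem neg_two_mul_pow_le_cosProd_mul {q : ℕ} {θ : ℝ} (hq : 2 ≤ q) (hθ : 0 ≤ θ) (hθ' : θ ≤ π) :
    -2 * (2 / 3) ^ q ≤ cosProd (2 * q) θ * (1 - cos θ) := by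
  have hpow : (0 : ℝ) < (2 / 3) ^ q := by positivity
  have hcos : 0 ≤ 1 - cos θ := by linarith [cos_le_one θ]
  rcases le_total θ (π / (2 * (2 * q : ℕ))) with h | h
  · linarith [mul_nonneg (cosProd_nonneg hθ h) hcos]
  · have hsq := cosProd_sq_le (by omega) h hθ'
    rw [mul_comm 2 q, pow_mul] at hsq
    have := (abs_le.1 (abs_le_of_sq_le_sq hsq hpow.le)).1
    rw [mul_comm q 2] at this
    nlinarith [neg_one_le_cos θ]

theorem one_sub_sum_le_prod_one_sub {ι : Type*} {s : Finset ι} {u : ι → ℝ}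
    (h₀ : ∀ j ∈ s, 0 ≤ u j) (h₁ : ∀ j ∈ s, u j ≤ 1) : 1 - ∑ j ∈ s, u j ≤ ∏ j ∈ s, (1 - u j) := by
  classical
  induction s using Finset.induction with
  | empty => simp
  | insert i s hi ih =>
    simp only [mem_insert, forall_eq_or_imp] at h₀ h₁
    rw [sum_insert hi, prod_insert hi]
    have hmul := mul_le_mul_of_nonneg_left (ih h₀.2 h₁.2) (by linarith : 0 ≤ 1 - u i)
    nlinarith [mul_nonneg h₀.1 (sum_nonneg h₀.2)]

theorem sum_range_odd_sq (r : ℕ) :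
    ∑ j ∈ range r, ((2 * j + 1) / 2 : ℝ) ^ 2 = r * (4 * r ^ 2 - 1) / 12 := by
  induction r with
  | zero => simp
  | succ r ih =>
    rw [sum_range_succ, ih]
    push_cast
    ring

/-- Rests on `cos x ≥ 1 - x ^ 2 / 2 ≥ (1 - 27 / 100 * x ^ 2) ^ 2` for `x ^ 2 ≤ 1 / 2`; being a
square, the bound stays valid up to the zero of its base. -/
theorem sq_le_cosProd {r : ℕ} {θ : ℝ} (hθ : 0 ≤ θ) (hrθ : (r * θ) ^ 2 ≤ 1 / 2)
    (hrθ' : r ^ 3 * θ ^ 2 ≤ 100 / 9) :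
    (1 - r ^ 3 * θ ^ 2 / (100 / 9)) ^ 2 ≤ cosProd r θ := by
  let u (j : ℕ) : ℝ := 27 / 100 * ((2 * j + 1) * θ / 2) ^ 2
  have hangle {j : ℕ} (hj : j ∈ range r) : ((2 * j + 1) * θ / 2) ^ 2 ≤ 1 / 2 := by
    have hj' : (j : ℝ) + 1 ≤ r := by exact_mod_cast mem_range.1 hj
    refine le_trans (pow_le_pow_left₀ (by positivity) ?_ 2) hrθ
    nlinarith
  have hcos {j : ℕ} (hj : j ∈ range r) : (1 - u j) ^ 2 ≤ cos ((2 * j + 1) * θ / 2) := by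
    refine le_trans ?_ one_sub_sq_div_two_le_cos
    have := hangle hj
    have : 0 ≤ ((2 * j + 1) * θ / 2) ^ 2 := by positivity
    simp only [u]
    nlinarith
  have hsum : ∑ j ∈ range r, u j ≤ r ^ 3 * θ ^ 2 / (100 / 9) := by
    have hu (j : ℕ) : u j = 27 / 100 * θ ^ 2 * ((2 * j + 1) / 2) ^ 2 := by simp only [u]; ring
    simp only [hu]
    rw [← mul_sum, sum_range_odd_sq]
    have : 0 ≤ θ ^ 2 * r := by positivity
    linarith
  have hbernoulli : 1 - r ^ 3 * θ ^ 2 / (100 / 9) ≤ ∏ j ∈ range r, (1 - u j) :=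
    (by linarith : _ ≤ 1 - ∑ j ∈ range r, u j).trans <| one_sub_sum_le_prod_one_sub
      (fun j _ => by simp only [u]; positivity)
      fun j hj => by have := hangle hj; simp only [u]; linarith
  calc (1 - r ^ 3 * θ ^ 2 / (100 / 9)) ^ 2 ≤ (∏ j ∈ range r, (1 - u j)) ^ 2 :=
        pow_le_pow_left₀ (by linarith) hbernoulli 2
    _ ≤ cosProd r θ := by
        rw [← prod_pow]
        exact prod_le_prod (fun j _ => sq_nonneg _) fun j hj => hcos hj

theorem mul_sq_le_one_sub_cos {θ : ℝ} (hθ : |θ| ≤ 0.4) : 0.49 * θ ^ 2 ≤ 1 - cos θ := by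
  have hbound := (abs_le.1 (cos_bound (hθ.trans (by norm_num)))).2
  have hsq : |θ| ^ 2 ≤ 0.4 ^ 2 := pow_le_pow_left₀ (abs_nonneg θ) hθ 2
  have hquartic : |θ| ^ 4 = θ ^ 2 * |θ| ^ 2 := by rw [← sq_abs θ]; ring
  nlinarith [sq_nonneg θ]

theorem integral_one_sub_sq_sq_mul_sq {T : ℝ} (hT : T ≠ 0) :
    ∫ θ in (0 : ℝ)..T, (1 - θ ^ 2 / T ^ 2) ^ 2 * θ ^ 2 = 8 / 105 * T ^ 3 := by
  have hexpand (θ : ℝ) : (1 - θ ^ 2 / T ^ 2) ^ 2 * θ ^ 2 =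
      θ ^ 2 - 2 / T ^ 2 * θ ^ 4 + 1 / T ^ 4 * θ ^ 6 := by
    field_simp
    ring
  simp only [hexpand]
  rw [intervalIntegral.integral_add, intervalIntegral.integral_sub]
  · simp only [intervalIntegral.integral_const_mul, integral_pow]
    field_simp
    norm_num
    ring
  all_goals exact Continuous.intervalIntegrable (by fun_prop) _ _

theorem le_integral_cosProd_mul {r : ℕ} {T : ℝ} (hr : 128 ≤ r) (hT : 0 < T)
    (hrT : r ^ 3 * T ^ 2 = 100 / 9) :
    0.49 * (8 / 105 * T ^ 3) ≤ ∫ θ in (0 : ℝ)..T, cosProd r θ * (1 - cos θ) := by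
  have hr' : (128 : ℝ) ≤ r := by exact_mod_cast hr
  have hrT_sq : 128 * (r * T) ^ 2 ≤ 100 / 9 := by
    rw [← hrT]
    nlinarith [sq_nonneg (r * T)]
  have hT_small : T ≤ 0.4 := by
    have : (128 * T) ^ 2 ≤ (r * T) ^ 2 := by gcongr
    nlinarith
  have hcont := continuous_cosProd r
  rw [← integral_one_sub_sq_sq_mul_sq hT.ne', ← intervalIntegral.integral_const_mul]
  refine intervalIntegral.integral_mono_on hT.le (Continuous.intervalIntegrable (by fun_prop) _ _)
    (Continuous.intervalIntegrable (by fun_prop) _ _) fun θ hθ => ?_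
  have hscale : r ^ 3 * θ ^ 2 / (100 / 9) = θ ^ 2 / T ^ 2 := by
    rw [← hrT]
    field_simp
  have hrθ : (r * θ) ^ 2 ≤ (r * T) ^ 2 := by have := hθ.1; have := hθ.2; gcongr
  have hrθ' : r ^ 3 * θ ^ 2 ≤ r ^ 3 * T ^ 2 := by have := hθ.1; have := hθ.2; gcongr
  have hkernel := sq_le_cosProd hθ.1 (by linarith) (hrθ'.trans_eq hrT)
  rw [hscale] at hkernel
  have hcos := mul_sq_le_one_sub_cos (abs_le.2 ⟨by linarith [hθ.1], hθ.2.trans hT_small⟩)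
  calc 0.49 * ((1 - θ ^ 2 / T ^ 2) ^ 2 * θ ^ 2) = (1 - θ ^ 2 / T ^ 2) ^ 2 * (0.49 * θ ^ 2) := by
        ring
    _ ≤ cosProd r θ * (1 - cos θ) :=
        mul_le_mul hkernel hcos (by positivity) ((sq_nonneg _).trans hkernel)

theorem two_thirds_pow_mul_sqrt_pow_le {q : ℕ} (hq : 64 ≤ q) :
    (2 / 3 : ℝ) ^ q * √(2 * q) ^ 9 ≤ 0.02 := by
  have hsq : ((4 / 9 : ℝ) ^ q * (2 * q) ^ 9) ≤ 0.02 ^ 2 := by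
    induction q, hq using Nat.le_induction with
    | base => norm_num
    | succ q hq ih =>
      have hq' : (64 : ℝ) ≤ q := by exact_mod_cast hq
      have hstep : 2 * ((q + 1 : ℕ) : ℝ) ≤ 65 / 64 * (2 * q) := by
        push_cast
        linarith
      calc (4 / 9 : ℝ) ^ (q + 1) * (2 * (q + 1 : ℕ)) ^ 9
          ≤ (4 / 9 : ℝ) ^ (q + 1) * (65 / 64 * (2 * q)) ^ 9 :=
            mul_le_mul_of_nonneg_left (pow_le_pow_left₀ (by positivity) hstep 9) (by positivity)
        _ = 4 / 9 * (65 / 64) ^ 9 * ((4 / 9 : ℝ) ^ q * (2 * q) ^ 9) := by ring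
        _ ≤ 1 * ((4 / 9 : ℝ) ^ q * (2 * q) ^ 9) := by gcongr; norm_num
        _ ≤ 0.02 ^ 2 := by rwa [one_mul]
  refine le_of_sq_le_sq ?_ (by norm_num)
  rwa [mul_pow, pow_right_comm, pow_right_comm _ 9, sq_sqrt (by positivity),
    (by norm_num : (2 / 3 : ℝ) ^ 2 = 4 / 9)]

theorem neg_two_pi_mul_pow_le_integral {q : ℕ} {T : ℝ} (hq : 2 ≤ q) (hT : 0 ≤ T) (hT' : T ≤ π) :
    -(2 * π * (2 / 3) ^ q) ≤ ∫ θ in T..π, cosProd (2 * q) θ * (1 - cos θ) := by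
  have hcont := continuous_cosProd (2 * q)
  calc -(2 * π * (2 / 3) ^ q) ≤ ∫ _ in T..π, (-2 * (2 / 3) ^ q : ℝ) := by
        rw [intervalIntegral.integral_const, smul_eq_mul]
        have : 0 ≤ T * (2 / 3) ^ q := by positivity
        linarith
    _ ≤ ∫ θ in T..π, cosProd (2 * q) θ * (1 - cos θ) :=
        intervalIntegral.integral_mono_on hT' intervalIntegrable_const
          (Continuous.intervalIntegrable (by fun_prop) _ _)
          fun θ hθ => neg_two_mul_pow_le_cosProd_mul hq (hT.trans hθ.1) hθ.2

theorem pi_le_integral_cosProd_mul {q : ℕ} (hq : 64 ≤ q) :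
    π ≤ 3 * (∫ θ in (0 : ℝ)..π, cosProd (2 * q) θ * (1 - cos θ)) * √(2 * q) ^ 9 := by
  have hq' : (64 : ℝ) ≤ q := by exact_mod_cast hq
  have htail := two_thirds_pow_mul_sqrt_pow_le hq
  set s := √(2 * q)
  have hs_sq : s ^ 2 = 2 * q := sq_sqrt (by positivity)
  have hs : 1 ≤ s := one_le_sqrt.2 (by linarith)
  -- The zero of the lower bound for the kernel in `sq_le_cosProd`.
  set T := 10 / 3 / s ^ 3 with hT
  have hT_pos : 0 < T := by positivity
  have hTs : T ^ 3 * s ^ 9 = 1000 / 27 := by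
    rw [hT]
    field_simp
    norm_num
  have hrT : ((2 * q : ℕ) : ℝ) ^ 3 * T ^ 2 = 100 / 9 := by
    push_cast
    rw [← hs_sq, hT]
    field_simp
    norm_num
  have hTπ : T ≤ π := by
    have : T ^ 2 ≤ π ^ 2 := by
      push_cast at hrT
      nlinarith [pi_gt_three, pow_le_pow_left₀ (by norm_num) hq' 3]
    exact le_of_sq_le_sq this pi_pos.le
  have hcont := continuous_cosProd (2 * q)
  have hsplit := intervalIntegral.integral_add_adjacent_intervals
    (f := fun θ => cosProd (2 * q) θ * (1 - cos θ)) (μ := MeasureTheory.volume) (a := 0) (b := T)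
    (c := π) (Continuous.intervalIntegrable (by fun_prop) _ _)
    (Continuous.intervalIntegrable (by fun_prop) _ _)
  calc π ≤ 3 * (0.49 * (8 / 105 * (1000 / 27)) - 2 * π * 0.02) := by linarith [pi_lt_d2]
    _ ≤ 3 * (0.49 * (8 / 105 * (T ^ 3 * s ^ 9)) - 2 * π * ((2 / 3) ^ q * s ^ 9)) := by
        rw [hTs]
        gcongr
    _ = 3 * (0.49 * (8 / 105 * T ^ 3) + -(2 * π * (2 / 3) ^ q)) * s ^ 9 := by ring
    _ ≤ _ := by
        rw [← hsplit]
        gcongr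
        · exact le_integral_cosProd_mul (by omega) hT_pos hrT
        · exact neg_two_pi_mul_pow_le_integral (by omega) hT_pos.le hTπ

theorem two_pow_le_selfConjGap {q : ℕ} (hq : 16 ≤ q) :
    (2 : ℝ) ^ (2 * q) ≤ 3 * selfConjGap q * √(2 * q) ^ 9 := by
  rcases lt_or_ge q 64 with h | h
  · exact two_pow_le_selfConjGap_of_lt hq h
  · refine le_of_mul_le_mul_left ?_ pi_pos
    calc π * 2 ^ (2 * q)
        ≤ 3 * (∫ θ in (0 : ℝ)..π, cosProd (2 * q) θ * (1 - cos θ)) * √(2 * q) ^ 9 * 2 ^ (2 * q) :=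
          mul_le_mul_of_nonneg_right (pi_le_integral_cosProd_mul h) (by positivity)
      _ = 3 * (π * selfConjGap q) * √(2 * q) ^ 9 := by
          rw [pi_mul_selfConjGap (by omega)]
          ring
      _ = π * (3 * selfConjGap q * √(2 * q) ^ 9) := by ring

end FourierKernel

section NumericalBound

/-- The lower bound `A * 2 ^ √s / s ^ (9 / 4)` with Pak and Panova's constant `A`. -/
noncomputable def qBinomialBound (s : ℕ) : ℝ :=
  ((2 : ℝ) ^ (-(9 : ℝ) / √2) * (3 * √3 / (√2 * Real.pi ^ 2))) * (2 : ℝ) ^ √(s : ℝ) /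
    (s : ℝ) ^ ((9 : ℝ) / 4)

theorem qBinomialBound_const_le :
    (2 : ℝ) ^ (-(9 : ℝ) / √2) * (3 * √3 / (√2 * Real.pi ^ 2)) ≤ 0.0049 := by
  have hsqrt_two : 1.414 ≤ √(2 : ℝ) := Real.le_sqrt_of_sq_le (by norm_num)
  have hsqrt_two' : √(2 : ℝ) ≤ 1.44 := (Real.sqrt_le_left (by norm_num)).2 (by norm_num)
  have hsqrt_three : √(3 : ℝ) ≤ 1.7321 := (Real.sqrt_le_left (by norm_num)).2 (by norm_num)
  have hpi : 9.869 ≤ Real.pi ^ 2 := by nlinarith [Real.pi_gt_d4]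
  have hpow : (2 : ℝ) ^ (-(9 : ℝ) / √2) ≤ 0.01315 :=
    calc (2 : ℝ) ^ (-(9 : ℝ) / √2) ≤ 2 ^ (-(25 : ℝ) / 4) := by
          refine Real.rpow_le_rpow_of_exponent_le one_le_two ?_
          rw [div_le_iff₀ (by positivity)]
          linarith
      _ ≤ 0.01315 := by
          refine le_of_pow_le_pow_left₀ four_ne_zero (by norm_num) ?_
          rw [← Real.rpow_mul_natCast (by norm_num)]
          norm_num
  have hquot : 3 * √3 / (√2 * Real.pi ^ 2) ≤ 0.3725 := by
    rw [div_le_iff₀ (by positivity)]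
    have := mul_le_mul hsqrt_two hpi (by norm_num) (by positivity)
    linarith
  calc _ ≤ (0.01315 : ℝ) * 0.3725 := mul_le_mul hpow hquot (by positivity) (by norm_num)
    _ ≤ 0.0049 := by norm_num

theorem qBinomialBound_lt {s b : ℕ} {c V : ℝ} (hc : 0 < c) (hcs : c ^ 4 ≤ s) (hsb : s ≤ b ^ 2)
    (hV : 0.0049 * 2 ^ b < V * c ^ 9) : qBinomialBound s < V := by
  have hs : (0 : ℝ) < s := lt_of_lt_of_le (by positivity) hcs
  have hsqrt : √(s : ℝ) ≤ b := (Real.sqrt_le_left (by positivity)).2 (by exact_mod_cast hsb)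
  have hV_pos : 0 < V := pos_of_mul_pos_left (lt_trans (by positivity) hV) (by positivity)
  rw [qBinomialBound, div_lt_iff₀ (by positivity)]
  calc _ ≤ (0.0049 : ℝ) * 2 ^ (b : ℝ) :=
        mul_le_mul qBinomialBound_const_le (Real.rpow_le_rpow_of_exponent_le one_le_two hsqrt)
          (by positivity) (by norm_num)
    _ = 0.0049 * 2 ^ b := by rw [Real.rpow_natCast]
    _ < V * c ^ 9 := hV
    _ = V * (c ^ 4) ^ ((9 : ℝ) / 4) := by
        rw [← Real.rpow_natCast_mul hc.le]
        norm_num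
    _ ≤ V * (s : ℝ) ^ ((9 : ℝ) / 4) := by gcongr

theorem qBinomialBound_lt_one {s : ℕ} (hs : 4 ≤ s) (hs' : s ≤ 28 ^ 2) : qBinomialBound s < 1 := by
  rify at hs
  rcases le_or_gt s (12 ^ 2) with h | h
  · exact qBinomialBound_lt (c := 1.41) (by norm_num) (by linarith) h (by norm_num)
  rcases le_or_gt s (23 ^ 2) with h' | h'
  · rify at h
    exact qBinomialBound_lt (c := 3.4) (by norm_num) (by linarith) h' (by norm_num)
  · rify at h'
    exact qBinomialBound_lt (c := 4.79) (by norm_num) (by linarith) hs' (by norm_num)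

theorem qBinomialBound_lt_fifty {s : ℕ} (hs : 28 ^ 2 ≤ s) (hs' : s ≤ 36 ^ 2) :
    qBinomialBound s < 50 := by
  rify at hs
  rcases le_or_gt s (34 ^ 2) with h | h
  · exact qBinomialBound_lt (c := 5) (by norm_num) (by linarith) h (by norm_num)
  · rify at h
    exact qBinomialBound_lt (c := 5.8) (by norm_num) (by linarith) hs' (by norm_num)

theorem qBinomialBound_lt_selfConjGap {q s : ℕ} (hq : 16 ≤ q) (hs : (2 * q) ^ 2 ≤ s)
    (hs' : s ≤ (2 * q + 6) ^ 2) : qBinomialBound s < selfConjGap q := by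
  have hgap := two_pow_le_selfConjGap hq
  have hfourth : √(2 * q : ℝ) ^ 4 = (2 * q) ^ 2 := by
    rw [pow_mul _ 2 2, Real.sq_sqrt (by positivity)]
  refine qBinomialBound_lt (c := √(2 * q)) (by positivity) ?_ hs' ?_
  · rw [hfourth]
    exact_mod_cast hs
  · have : (0 : ℝ) < 2 ^ (2 * q) := by positivity
    rw [pow_add]
    linarith

theorem exists_even_square_near_min {l k : ℕ} (hl : 36 ^ 2 < l ^ 2) (hk : 36 ^ 2 < 2 * k) :
    ∃ q, 16 ≤ q ∧ 2 * q + 5 ≤ l ∧ 2 * q ^ 2 + 2 ≤ k ∧ (2 * q) ^ 2 ≤ min (2 * k) (l ^ 2) ∧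
      min (2 * k) (l ^ 2) ≤ (2 * q + 6) ^ 2 := by
  have hl' : 36 < l := lt_of_pow_lt_pow_left' 2 hl
  obtain ⟨t, ht⟩ : ∃ t, t = Nat.sqrt (2 * k - 4) := ⟨_, rfl⟩
  have ht₁ : t ^ 2 ≤ 2 * k - 4 := ht ▸ Nat.sqrt_le' _
  have ht₂ : 2 * k - 4 < (t + 1) ^ 2 := ht ▸ Nat.lt_succ_sqrt' _
  have ht₃ : 35 ≤ t := ht ▸ Nat.le_sqrt.2 (by omega)
  obtain ⟨q, hq⟩ : ∃ q, q = min (l - 5) t / 2 := ⟨_, rfl⟩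
  have hqt : (2 * q) ^ 2 ≤ t ^ 2 := Nat.pow_le_pow_left (by omega) 2
  refine ⟨q, by omega, by omega, by rw [mul_pow] at hqt; omega,
    le_min (by omega) (Nat.pow_le_pow_left (by omega) 2), ?_⟩
  rcases le_total (l - 5) t with h | h
  · exact min_le_of_right_le (Nat.pow_le_pow_left (by omega) 2)
  · refine min_le_of_left_le ?_
    calc 2 * k ≤ (t + 1) ^ 2 + 3 := by omega
      _ ≤ (t + 5) ^ 2 := by nlinarith
      _ ≤ (2 * q + 6) ^ 2 := Nat.pow_le_pow_left (by omega) 2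

theorem exists_qBinomialBound_lt_selfConjGap {l k : ℕ} (hs : 28 ^ 2 < min (2 * k) (l ^ 2)) :
    ∃ q, 8 ≤ q ∧ 2 * q + 5 ≤ l ∧ 2 * q ^ 2 + 2 ≤ k ∧
      qBinomialBound (min (2 * k) (l ^ 2)) < selfConjGap q := by
  obtain ⟨hk, hl⟩ := lt_min_iff.1 hs
  rcases le_or_gt (min (2 * k) (l ^ 2)) (36 ^ 2) with hs' | hs'
  · have : 28 < l := lt_of_pow_lt_pow_left' 2 hl
    refine ⟨12, by omega, by omega, by omega, ?_⟩
    rw [selfConjGap_twelve]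
    exact_mod_cast qBinomialBound_lt_fifty hs.le hs'
  · obtain ⟨hk', hl'⟩ := lt_min_iff.1 hs'
    obtain ⟨q, hq, hql, hqk, hqs, hsq⟩ := exists_even_square_near_min hl' hk'
    exact ⟨q, by omega, hql, hqk, qBinomialBound_lt_selfConjGap hq hqs hsq⟩

end NumericalBound

theorem rectPartitions_sub_eq_highestWeightMult {l m k : ℕ} (hk : k ≠ 0) (hkm : 2 * k ≤ l * m) :
    (rectPartitions k l m : ℝ) - rectPartitions (k - 1) l m = highestWeightMult l m k := by
  obtain ⟨k, rfl⟩ := Nat.exists_eq_succ_of_ne_zero hk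
  rw [Nat.succ_sub_one, rectPartitions_eq_coeff_gaussBinom, rectPartitions_eq_coeff_gaussBinom,
    ← highestWeightMult.succ_add_coeff hkm, Nat.cast_add, add_sub_cancel_right]

/-- With the explicit constant `A = 2^{−9/√2} · 3√3/(√2·π²)`, for all `m ≥ ℓ ≥ 8` and
all `2 ≤ k ≤ ℓm/2`, one has `p_k(ℓ,m) − p_{k−1}(ℓ,m) > A · 2^{√s} / s^{9/4}` where
`s = min {2k, ℓ²}`. -/
theorem kronecker_qbinomial_lower_bound_explicit :
    ∀ ℓ m k : ℕ, 8 ≤ ℓ → ℓ ≤ m → 2 ≤ k → 2 * k ≤ ℓ * m →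
      ((rectPartitions k ℓ m : ℝ) - (rectPartitions (k - 1) ℓ m : ℝ)) >
        ((2 : ℝ) ^ (-(9 : ℝ) / Real.sqrt 2) *
            (3 * Real.sqrt 3 / (Real.sqrt 2 * Real.pi ^ 2))) *
          (2 : ℝ) ^ Real.sqrt ((min (2 * k) (ℓ ^ 2) : ℕ) : ℝ) /
            ((min (2 * k) (ℓ ^ 2) : ℕ) : ℝ) ^ ((9 : ℝ) / 4) := by
  intro ℓ m k hℓ hℓm hk hkm
  rw [rectPartitions_sub_eq_highestWeightMult (by omega) hkm]
  change qBinomialBound (min (2 * k) (ℓ ^ 2)) < highestWeightMult ℓ m k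
  rcases le_or_gt (min (2 * k) (ℓ ^ 2)) (28 ^ 2) with hs | hs
  · have hpos : 1 ≤ highestWeightMult ℓ m k :=
      StrictUnimodal.of_le (by omega) (by omega) (.inl hℓ) (by omega) hkm
    calc qBinomialBound (min (2 * k) (ℓ ^ 2))
        < 1 := qBinomialBound_lt_one (le_min (by omega) (by nlinarith)) hs
      _ ≤ highestWeightMult ℓ m k := by exact_mod_cast hpos
  · obtain ⟨q, hq, hqℓ, hqk, hlt⟩ := exists_qBinomialBound_lt_selfConjGap hs
    calc qBinomialBound (min (2 * k) (ℓ ^ 2))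
        < selfConjGap q := hlt
      _ ≤ highestWeightMult ℓ m k := by
        exact_mod_cast selfConjGap_le_highestWeightMult hq hqℓ (by omega) hqk hkm
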